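/- arXiv:math/0010124 — 2 statements merged into one kernel-verified Lean document; each statement's English description precedes it below -/
import Mathlib

section
/- Let F → E → B be a TNCZ rational fibration in which B is formal and F is formal and elliptic, so that the bigraded model of F is two-stage: V = V_0 ⊕ V_1. Let H(B),0 → H(B)⊗ΛV,D → ΛV,d be a filtered model with D(V_0)=0 and D(V_1) ⊆ H(B)⊗(ΛV)_0. Then H(B)⊗ΛV,D is a bigraded DG algebra with respect to the lower grading, and H_+(H(B)⊗ΛV,D) = 0; that is, every D-cocycle of positive lower degree in H(B)⊗ΛV is a D-coboundary. -/
/-!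
The total algebra is `H(B) ⊗ ΛV` as a vector space (`exists_tensorEquiv`): relative freeness makes
it the graded tensor product of `H(B)` with the copy of `ΛV` generated by the lifted generators. The
lower grading `H(B) ⊗ (ΛV)_k` therefore spans, and it is multiplicative because the two factors
commute up to sign. Since `D` vanishes on `H(B)` and is a derivation, it lowers the lower degree by
one as soon as it does so on generators of `V` (`d_section_mem`); in the two-stage case this is the
assumption on `V_0` and `V_1`.

For `H_+ = 0`, filter by the degree in the base, `H(B)^{≥ p} ⊗ ΛV`. Modulo the next filtration step
`D` is `± 1 ⊗ d`, and `d` is exact in lower degree `k + 1`. Hence there is an operator `g` on `ΛV`,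
from lower degree `k + 1` to lower degree `k + 2`, with `d g + h d = 1` in lower degree `k + 1`
(`exists_homotopy`). With `G` the signed extension `± 1 ⊗ g`, the operator `1 - D G` preserves
total degree and the space of `D`-cocycles of lower degree `k + 1`, on which it raises the
filtration. As `H(B)^{≥ p} ⊗ ΛV` lives in total degrees at least `p`, some iterate of `1 - D G` kills a
given cocycle; but `x` and `(1 - D G) x` differ by a coboundary, so `x` is a coboundary
(`exact_of_contracting`, `exact_of_mem_tlow`).
-/

/-!
A self-contained framework for rational homotopy theory at the level of Sullivan models,
following the conventions of G. Lupton, "Variations on a conjecture of Halperin".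

All spaces are simply connected CW complexes of finite type over ℚ; following the paper,
a space is represented by its Sullivan minimal model (a minimal Sullivan algebra), and a
rational fibration `F → E → B` is represented by (the minimal model of the fibration,
i.e.) a KS-extension  `M_B → M_B ⊗ ΛV → ΛV`  whose quotient `ΛV, d` is a minimal model
of the fibre `F`; the total space `E` is represented by the middle (KS) algebra, which is
quasi-isomorphic to the minimal model of `E`.
-/

namespace RHT

/-- A non-negatively graded, graded-commutative differential graded algebra over `ℚ`
(a cochain algebra) : the basic algebraic object of rational homotopy theory. -/
structure CDGA : Type 1 where
  A : Type
  [ringA : Ring A]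
  [algA : Algebra ℚ A]
  grading : ℕ → Submodule ℚ A
  [gradedA : GradedAlgebra grading]
  gcomm : ∀ {i j : ℕ} {x y : A}, x ∈ grading i → y ∈ grading j →
    x * y = ((-1 : ℚ) ^ (i * j)) • (y * x)
  d : A →ₗ[ℚ] A
  d_mem : ∀ {i : ℕ} {x : A}, x ∈ grading i → d x ∈ grading (i + 1)
  d_sq : ∀ x : A, d (d x) = 0
  leibniz : ∀ {i : ℕ} (x y : A), x ∈ grading i →
    d (x * y) = d x * y + ((-1 : ℚ) ^ i) • (x * d y)

attribute [instance] CDGA.ringA CDGA.algA CDGA.gradedA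

namespace CDGA

/-- `x` is a coboundary. -/
def IsExact (C : CDGA) (x : C.A) : Prop := ∃ y : C.A, C.d y = x

def cocycles (C : CDGA) (i : ℕ) : Submodule ℚ C.A := C.grading i ⊓ LinearMap.ker C.d

def coboundaries (C : CDGA) (i : ℕ) : Submodule ℚ C.A := C.grading i ⊓ LinearMap.range C.d

/-- The degree `i` cohomology of a cochain algebra. -/
abbrev cohomology (C : CDGA) (i : ℕ) : Type :=
  ↥(C.cocycles i) ⧸ (Submodule.comap (C.cocycles i).subtype (C.coboundaries i))

/-- The differential vanishes identically. -/
def ZeroDiff (C : CDGA) : Prop := ∀ x : C.A, C.d x = 0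

/-- The rational cup-length of (the cohomology of) a cochain algebra: the greatest `n`
such that some `n`-fold product of cocycles of positive degree is not a coboundary. -/
noncomputable def cup0 (C : CDGA) : ℕ :=
  sSup {n | ∃ l : List C.A, l.length = n ∧
    (∀ x ∈ l, (∃ i, 0 < i ∧ x ∈ C.grading i) ∧ C.d x = 0) ∧ ¬ C.IsExact l.prod}

/-- All `(n+1)`-fold products of elements of the augmentation ideal vanish. -/
def NilpotentOfLength (C : CDGA) (n : ℕ) : Prop :=
  ∀ l : List C.A, l.length = n + 1 → (∀ x ∈ l, ∃ i, 0 < i ∧ x ∈ C.grading i) →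
    l.prod = 0

end CDGA

/-- A morphism of cochain algebras: a `ℚ`-algebra map preserving degrees and
commuting with the differentials. -/
structure Hom (C D : CDGA) where
  toAlgHom : C.A →ₐ[ℚ] D.A
  map_grading : ∀ {i : ℕ} {x : C.A}, x ∈ C.grading i → toAlgHom x ∈ D.grading i
  comm_d : ∀ x : C.A, toAlgHom (C.d x) = D.d (toAlgHom x)

/-- A morphism of cochain algebras is a quasi-isomorphism if it induces an isomorphism
on cohomology (stated elementwise: surjectivity and injectivity on cohomology classes). -/
def QuasiIso {C D : CDGA} (f : Hom C D) : Prop :=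
  (∀ y : D.A, D.d y = 0 → ∃ x : C.A, C.d x = 0 ∧ D.IsExact (f.toAlgHom x - y)) ∧
  (∀ x : C.A, C.d x = 0 → D.IsExact (f.toAlgHom x) → C.IsExact x)

/-- A (cofibrant) cochain algebra is formal if it admits a quasi-isomorphism to a cochain
algebra with zero differential (its cohomology algebra).  A space is formal iff its
minimal model (or any Sullivan model of it) is formal in this sense. -/
def Formal (C : CDGA) : Prop :=
  ∃ (H : CDGA) (f : Hom C H), H.ZeroDiff ∧ QuasiIso f

/-- A Sullivan algebra: a cochain algebra which is free graded-commutative on a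
(simply connected, finite type) graded vector space `V` of generators.  Freeness is
encoded by the universal property of the free graded-commutative algebra. -/
structure Sullivan extends CDGA where
  V : ℕ → Submodule ℚ A
  V_le : ∀ i, V i ≤ grading i
  V_zero : V 0 = ⊥
  V_one : V 1 = ⊥
  V_fin : ∀ i, FiniteDimensional ℚ (V i)
  generates : Algebra.adjoin ℚ (⋃ i, (V i : Set A)) = ⊤
  free : ∀ (C : Type) [instC : Ring C] [instC2 : Algebra ℚ C] (𝒞 : ℕ → Submodule ℚ C),
    (1 : C) ∈ 𝒞 0 →
    (∀ i j (x y : C), x ∈ 𝒞 i → y ∈ 𝒞 j → x * y ∈ 𝒞 (i + j)) →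
    (∀ i j (x y : C), x ∈ 𝒞 i → y ∈ 𝒞 j → x * y = ((-1 : ℚ) ^ (i * j)) • (y * x)) →
    ∀ f : (i : ℕ) → V i →ₗ[ℚ] C, (∀ i (v : V i), f i v ∈ 𝒞 i) →
    ∃! φ : A →ₐ[ℚ] C, ∀ i (v : V i), φ (v : A) = f i v

namespace Sullivan

variable (S : Sullivan)

/-- The span of the generators. -/
def genSpan : Submodule ℚ S.A := ⨆ i, S.V i

/-- `Λ^{≥ n} V` : the ideal spanned by products of at least `n` generators. -/
def lengthGE (n : ℕ) : Submodule ℚ S.A := S.genSpan ^ n * (⊤ : Submodule ℚ S.A)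

/-- Minimality: the differential is decomposable. -/
def Minimal : Prop := ∀ x ∈ S.genSpan, S.d x ∈ S.lengthGE 2

/-- The (space modelled by the) Sullivan algebra is elliptic: finitely many generators
(finite-dimensional rational homotopy) and finite-dimensional cohomology. -/
def Elliptic : Prop :=
  (∃ N, ∀ i, N ≤ i → S.V i = ⊥) ∧
  (∀ i, FiniteDimensional ℚ (S.toCDGA.cohomology i)) ∧
  (∃ N, ∀ i, N ≤ i → Subsingleton (S.toCDGA.cohomology i))

/-- Positive Euler characteristic : `Σ (-1)^i dim H^i > 0`. -/
def PosEuler : Prop :=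
  ∃ N : ℕ, (∀ i, N ≤ i → Subsingleton (S.toCDGA.cohomology i)) ∧
    0 < ∑ i ∈ Finset.range N,
      ((-1 : ℤ) ^ i * (Module.finrank ℚ (S.toCDGA.cohomology i) : ℤ))

/-- `S` is the minimal model of the odd sphere `S^m` : one generator, in odd degree `m`,
and zero differential. -/
def OddSphere (m : ℕ) : Prop :=
  Odd m ∧ Module.finrank ℚ (S.V m) = 1 ∧ (∀ j, j ≠ m → S.V j = ⊥) ∧ S.toCDGA.ZeroDiff

/-- `S` models a space which rationally is a wedge of odd-dimensional spheres:
it is formal, has no cohomology in positive even degrees, and all products of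
positive-degree cohomology classes vanish. -/
def WedgeOddSpheres : Prop :=
  Formal S.toCDGA ∧
  (∀ k, 0 < k → ∀ x ∈ S.grading (2 * k), S.d x = 0 → S.toCDGA.IsExact x) ∧
  (∀ i j (x y : S.A), 0 < i → 0 < j → x ∈ S.grading i → y ∈ S.grading j →
    S.d x = 0 → S.d y = 0 → S.toCDGA.IsExact (x * y))

/-- `S` models a rational Poincaré duality space with fundamental class in degree `N`. -/
def PoincareDuality (N : ℕ) : Prop :=
  (∀ i, FiniteDimensional ℚ (S.toCDGA.cohomology i)) ∧
  (∀ i, N < i → Subsingleton (S.toCDGA.cohomology i)) ∧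
  (Module.finrank ℚ (S.toCDGA.cohomology N) = 1) ∧
  (∀ i (x : S.A), i ≤ N → x ∈ S.grading i → S.d x = 0 → ¬ S.toCDGA.IsExact x →
    ∃ y ∈ S.grading (N - i), S.d y = 0 ∧ ¬ S.toCDGA.IsExact (x * y))

/-- Toomer's invariant `e₀` (of the space with minimal model `S`) : the greatest `n`
such that some non-coboundary cocycle lies in `Λ^{≥n} V`. -/
noncomputable def e0 : ℕ :=
  sSup {n | ∃ x ∈ S.lengthGE n, S.d x = 0 ∧ ¬ S.toCDGA.IsExact x}

/-- The set of even-degree generators. -/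
def evenGenSet : Set S.A := ⋃ k, (S.V (2 * k) : Set S.A)

/-- `Λ(V^even)` as a submodule. -/
def evenSub : Submodule ℚ S.A :=
  Subalgebra.toSubmodule (Algebra.adjoin ℚ S.evenGenSet)

/-- The span of the odd-degree generators. -/
def oddGenSpan : Submodule ℚ S.A := ⨆ k, S.V (2 * k + 1)

/-- A pure Sullivan algebra: `d(V^even) = 0` and `d(V^odd) ⊆ Λ(V^even)`. -/
def Pure : Prop :=
  (∀ k, ∀ v ∈ S.V (2 * k), S.d v = 0) ∧
  (∀ k, ∀ v ∈ S.V (2 * k + 1), S.d v ∈ S.evenSub)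

/-- For a pure Sullivan algebra, the lower (second) grading:
`(ΛV)_k = Λ(V^even) ⊗ Λ^k(V^odd)`. -/
def pureLow (k : ℕ) : Submodule ℚ S.A := S.evenSub * S.oddGenSpan ^ k

/-- The part of positive lower degree `(ΛV)_+`. -/
def pureLowPlus : Submodule ℚ S.A := ⨆ k, S.pureLow (k + 1)

/-- The cohomology of `S` is spherically generated: every cocycle agrees, modulo
coboundaries, with an element of the subalgebra generated by the cocycles lying in
the generating space `V` (the spherical classes). -/
def SphericallyGenerated : Prop :=
  ∀ x : S.A, S.d x = 0 →
    ∃ y ∈ Algebra.adjoin ℚ {w : S.A | w ∈ S.genSpan ∧ S.d w = 0},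
      S.toCDGA.IsExact (x - y)

end Sullivan

/-- A bigraded (minimal) Sullivan algebra: the bigraded model of a formal space.
The lower grading `low` is multiplicative, the generators split into pure lower
degrees, the differential lowers the lower degree by exactly one, and all cocycles
of positive lower degree are coboundaries (`H_+ = 0`). -/
structure BigradedSullivan extends Sullivan where
  low : ℕ → Submodule ℚ A
  low_one : (1 : A) ∈ low 0
  low_mul : ∀ i j (x y : A), x ∈ low i → y ∈ low j → x * y ∈ low (i + j)
  low_internal : DirectSum.IsInternal low
  V_low : ∀ i, V i = ⨆ k, (V i ⊓ low k)
  d_low_zero : ∀ x ∈ low 0, d x = 0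
  d_low : ∀ k, ∀ x ∈ low (k + 1), d x ∈ low k
  acyclic_plus : ∀ k, ∀ x ∈ low (k + 1), d x = 0 → ∃ y : A, d y = x

/-- The lower-degree-`0` part of the generators: `V_k` for `k = 0`, etc. -/
def BigradedSullivan.lowGens (S : BigradedSullivan) (k : ℕ) : Submodule ℚ S.A :=
  ⨆ i, (S.V i ⊓ S.low k)

/-- The universal property of a KS-extension `B → B ⊗ ΛV` : the total algebra is the
free graded-commutative algebra over `B` on the (lifted) generating space `V`. -/
def RelativelyFree (B T : CDGA) (incl : Hom B T) (V : ℕ → Submodule ℚ T.A) : Prop :=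
  ∀ (C : Type) [instC : Ring C] [instC2 : Algebra ℚ C] (𝒞 : ℕ → Submodule ℚ C),
    (1 : C) ∈ 𝒞 0 →
    (∀ i j (x y : C), x ∈ 𝒞 i → y ∈ 𝒞 j → x * y ∈ 𝒞 (i + j)) →
    (∀ i j (x y : C), x ∈ 𝒞 i → y ∈ 𝒞 j → x * y = ((-1 : ℚ) ^ (i * j)) • (y * x)) →
    ∀ (g : B.A →ₐ[ℚ] C), (∀ i (x : B.A), x ∈ B.grading i → g x ∈ 𝒞 i) →
    ∀ (f : (i : ℕ) → V i →ₗ[ℚ] C), (∀ i (v : V i), f i v ∈ 𝒞 i) →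
    ∃! φ : T.A →ₐ[ℚ] C, (∀ x : B.A, φ (incl.toAlgHom x) = g x) ∧
      (∀ i (v : V i), φ (v : T.A) = f i v)

/-- The KS (Koszul–Sullivan) condition: the lifted generators admit a well-ordered
basis `{v_α}` with `D v_α ∈ B ⊗ Λ(V_{<α})`. -/
def KSBasisCondition (B T : CDGA) (incl : Hom B T) (V : ℕ → Submodule ℚ T.A) : Prop :=
  ∃ (ι : Set ℕ) (b : ι → T.A),
    LinearIndependent ℚ b ∧
    Submodule.span ℚ (Set.range b) = (⨆ i, V i) ∧
    (∀ α : ι, ∃ i, b α ∈ V i) ∧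
    (∀ α : ι, T.d (b α) ∈
      Algebra.adjoin ℚ
        (Set.range (incl.toAlgHom : B.A → T.A) ∪ b '' {β : ι | (β : ℕ) < (α : ℕ)}))

/-- `incl : B → T` is a KS-extension of `B`. -/
def IsRelKS (B T : CDGA) (incl : Hom B T) : Prop :=
  ∃ V : ℕ → Submodule ℚ T.A, (∀ i, V i ≤ T.grading i) ∧
    RelativelyFree B T incl V ∧ KSBasisCondition B T incl V

/-- A model of a rational fibration `F → E → B` with base algebra `B` (a Sullivan model
of the base, or e.g. its cohomology `H(B)` when the base is formal) and fibre a Sullivan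
algebra `F = (ΛV, d)`: a KS-extension `B → B ⊗ ΛV → ΛV` whose quotient by the ideal
generated by `B⁺` is `F`.  The total algebra `T` represents the total space `E`. -/
structure FibrationModel (B : CDGA) (F : Sullivan) where
  T : CDGA
  incl : Hom B T
  proj : Hom T F.toCDGA
  V : ℕ → Submodule ℚ T.A
  V_le : ∀ i, V i ≤ T.grading i
  incl_inj : Function.Injective (incl.toAlgHom : B.A → T.A)
  relFree : RelativelyFree B T incl V
  ksBasis : KSBasisCondition B T incl V
  proj_incl : ∀ i, 0 < i → ∀ x ∈ B.grading i, proj.toAlgHom (incl.toAlgHom x) = 0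
  proj_V : ∀ i, (V i).map (proj.toAlgHom.toLinearMap) = F.V i
  fiber_inj : ∀ x ∈ Subalgebra.toSubmodule (Algebra.adjoin ℚ (⋃ i, (V i : Set T.A))),
    proj.toAlgHom x = 0 → x = 0
  ker_proj : ∀ x : T.A, proj.toAlgHom x = 0 ↔
    x ∈ (Submodule.map (incl.toAlgHom.toLinearMap) (⨆ i, B.grading (i + 1))) *
      (⊤ : Submodule ℚ T.A)

namespace FibrationModel

variable {B : CDGA} {F : Sullivan} (P : FibrationModel B F)

/-- The copy `1 ⊗ ΛV ⊆ B ⊗ ΛV` of the fibre inside the total algebra: the subalgebra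
generated by the lifted generators. -/
def fiberSub : Submodule ℚ P.T.A :=
  Subalgebra.toSubmodule (Algebra.adjoin ℚ (⋃ i, (P.V i : Set P.T.A)))

/-- The image `B ⊗ 1 ⊆ B ⊗ ΛV` of the base. -/
def baseSub : Submodule ℚ P.T.A := LinearMap.range (P.incl.toAlgHom.toLinearMap)

/-- The span of the lifted fibre generators. -/
def fiberGenSpan : Submodule ℚ P.T.A := ⨆ i, P.V i

/-- The span of all generators (base generators `W` together with the fibre ones). -/
def totalGenSpan (W : Submodule ℚ B.A) : Submodule ℚ P.T.A :=
  Submodule.map P.incl.toAlgHom.toLinearMap W ⊔ P.fiberGenSpan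

/-- `Λ^{≥n}(W ⊕ V)` in the total algebra. -/
def totalLengthGE (W : Submodule ℚ B.A) (n : ℕ) : Submodule ℚ P.T.A :=
  (P.totalGenSpan W) ^ n * (⊤ : Submodule ℚ P.T.A)

/-- The part of the fibre copy `1 ⊗ ΛV` lying over a submodule `K ⊆ ΛV`. -/
def fiberComap (K : Submodule ℚ F.A) : Submodule ℚ P.T.A :=
  P.fiberSub ⊓ Submodule.comap P.proj.toAlgHom.toLinearMap K

/-- The span of the even-degree lifted generators. -/
def evenGenSpan : Submodule ℚ P.T.A := ⨆ k, P.V (2 * k)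

/-- `Λ(V^even)` inside the total algebra. -/
def evenSub : Submodule ℚ P.T.A :=
  Subalgebra.toSubmodule (Algebra.adjoin ℚ (⋃ k, (P.V (2 * k) : Set P.T.A)))

/-- `Λ⁺(V^even)` inside the total algebra. -/
def evenPlus : Submodule ℚ P.T.A := P.evenGenSpan * P.evenSub

/-- The fibration (model) is totally non-cohomologous to zero: the projection onto the
fibre (modelling the fibre inclusion `j : F → E`) is surjective on cohomology. -/
def TNCZ : Prop :=
  ∀ y : F.A, F.d y = 0 → ∃ x : P.T.A, P.T.d x = 0 ∧
    CDGA.IsExact F.toCDGA (P.proj.toAlgHom x - y)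

end FibrationModel

/-- A (quasi-isomorphism) ladder between two fibration models: quasi-isomorphisms of
base, total and fibre algebras making both squares commute. -/
structure FibLadder {B B' : CDGA} {F F' : Sullivan}
    (P : FibrationModel B F) (P' : FibrationModel B' F') where
  fB : Hom B B'
  fT : Hom P.T P'.T
  fF : Hom F.toCDGA F'.toCDGA
  hB : QuasiIso fB
  hT : QuasiIso fT
  hF : QuasiIso fF
  commB : ∀ x : B.A, fT.toAlgHom (P.incl.toAlgHom x) = P'.incl.toAlgHom (fB.toAlgHom x)
  commF : ∀ x : P.T.A,
    fF.toAlgHom (P.proj.toAlgHom x) = P'.proj.toAlgHom (fT.toAlgHom x)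

/-- Two fibration models are quasi-isomorphic (model the same rational fibration). -/
def ModelPair {B B' : CDGA} {F F' : Sullivan}
    (P : FibrationModel B F) (P' : FibrationModel B' F') : Prop :=
  Nonempty (FibLadder P P') ∨ Nonempty (FibLadder P' P)

/-- An isomorphism of KS-extensions. -/
def FibIso {B B' : CDGA} {F F' : Sullivan}
    (P : FibrationModel B F) (P' : FibrationModel B' F') : Prop :=
  ∃ L : FibLadder P P', Function.Bijective (L.fB.toAlgHom : B.A → B'.A) ∧
    Function.Bijective (L.fT.toAlgHom : P.T.A → P'.T.A) ∧
    Function.Bijective (L.fF.toAlgHom : F.A → F'.A)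

/-- `cat₀ ≤ n` (Félix–Halperin): the projection `p_n : ΛV → ΛV/Λ^{≥n+1}V` makes `ΛV`
into a homotopy retract: for a relative KS-model `ΛV → R → ΛV/Λ^{≥n+1}V` of `p_n`
there is a retraction `ρ : R → ΛV` restricting to the identity on `ΛV`. -/
def catLe (S : Sullivan) (n : ℕ) : Prop :=
  ∃ (Q : CDGA) (q : Hom S.toCDGA Q),
    Function.Surjective (q.toAlgHom : S.A → Q.A) ∧
    (∀ x : S.A, q.toAlgHom x = 0 ↔ x ∈ S.lengthGE (n + 1)) ∧
    ∃ (R : CDGA) (ι : Hom S.toCDGA R) (ψ : Hom R Q) (ρ : Hom R S.toCDGA),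
      IsRelKS S.toCDGA R ι ∧ QuasiIso ψ ∧
      (∀ x : S.A, ψ.toAlgHom (ι.toAlgHom x) = q.toAlgHom x) ∧
      (∀ x : S.A, ρ.toAlgHom (ι.toAlgHom x) = x)

/-- The rational Lusternik–Schnirelmann category of the space with minimal model `S`. -/
noncomputable def cat0 (S : Sullivan) : ℕ := sInf {n | catLe S n}

/-- The rational cone-length (Cornea): the least `n` such that the minimal model is
quasi-isomorphic to a cochain algebra whose augmentation ideal has vanishing
`(n+1)`-fold products. -/
noncomputable def cl0 (S : Sullivan) : ℕ :=
  sInf {n | ∃ (Q : CDGA) (f : Hom S.toCDGA Q), QuasiIso f ∧ CDGA.NilpotentOfLength Q n}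

/-- For a formal space the invariants `cup₀, e₀, cat₀, cl₀` all agree; `nil₀` denotes
their common value (here represented by `cat₀`). -/
noncomputable def nil0 (S : Sullivan) : ℕ := cat0 S

end RHT

namespace RHT.Lower

open DirectSum

/-! ### Graded vector spaces and contracting homotopies -/

section Graded

variable {M N : Type} [AddCommGroup M] [Module ℚ M] [AddCommGroup N] [Module ℚ N]

/-- Linear maps given on the pieces of a grading glue to a linear map. -/
theorem exists_glue {𝒢 : ℕ → Submodule ℚ M} (h𝒢 : IsInternal 𝒢) (f : ℕ → M →ₗ[ℚ] N) :
    ∃ F : M →ₗ[ℚ] N, ∀ i, ∀ x ∈ 𝒢 i, F x = f i x := by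
  let e := LinearEquiv.ofBijective (DirectSum.coeLinearMap 𝒢) h𝒢
  refine ⟨(DirectSum.toModule ℚ ℕ N fun i => (f i).comp (𝒢 i).subtype).comp e.symm.toLinearMap,
    fun i x hx => ?_⟩
  have : e.symm x = DirectSum.lof ℚ ℕ (fun i => 𝒢 i) i ⟨x, hx⟩ := by
    rw [LinearEquiv.symm_apply_eq]
    exact (DirectSum.coeLinearMap_lof 𝒢 i ⟨x, hx⟩).symm
  simp [this]

/-- The projections onto the pieces of a grading. -/
theorem exists_proj {𝒢 : ℕ → Submodule ℚ M} (h𝒢 : IsInternal 𝒢) :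
    ∃ p : ℕ → M →ₗ[ℚ] M, (∀ k, ∀ x ∈ 𝒢 k, p k x = x) ∧
      (∀ k i, ∀ x ∈ 𝒢 i, i ≠ k → p k x = 0) := by
  choose p hp using fun k : ℕ =>
    exists_glue h𝒢 (fun i => if i = k then (LinearMap.id : M →ₗ[ℚ] M) else 0)
  refine ⟨p, fun k x hx => by simp [hp k k x hx], fun k i x hx hne => by simp [hp k i x hx, hne]⟩

theorem mem_of_homogeneous {𝒢 : ℕ → Submodule ℚ M} (h𝒢 : ⨆ i, 𝒢 i = ⊤) (L : Submodule ℚ M)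
    (h : ∀ i, 𝒢 i ≤ L) (x : M) : x ∈ L :=
  (iSup_le h : ⨆ i, 𝒢 i ≤ L) (h𝒢 ▸ Submodule.mem_top)

/-- Two linear maps agreeing on the pieces of a grading are equal. -/
theorem hom_eq_of_homogeneous {𝒢 : ℕ → Submodule ℚ M} (h𝒢 : ⨆ i, 𝒢 i = ⊤) (f g : M →ₗ[ℚ] N)
    (h : ∀ i, ∀ x ∈ 𝒢 i, f x = g x) (x : M) : f x = g x :=
  mem_of_homogeneous h𝒢 (LinearMap.eqLocus f g) h x

/-- If subspaces of the pieces span everything, projecting to a piece lands in its subspace. -/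
theorem proj_mem {𝒢 : ℕ → Submodule ℚ M} (h𝒢 : ⨆ i, 𝒢 i = ⊤) {p : ℕ → M →ₗ[ℚ] M}
    (hp : ∀ k, ∀ x ∈ 𝒢 k, p k x = x) (hp' : ∀ k i, ∀ x ∈ 𝒢 i, i ≠ k → p k x = 0)
    {L : ℕ → Submodule ℚ M} (hL : ⨆ i, L i = ⊤) (hLG : ∀ i, L i ≤ 𝒢 i) (k : ℕ) (x : M) :
    p k x ∈ L k := by
  refine mem_of_homogeneous hL ((L k).comap (p k)) (fun i y hy => ?_) x
  rw [Submodule.mem_comap]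
  by_cases h : i = k
  · subst h
    rwa [hp i y (hLG i hy)]
  · rw [hp' k i y (hLG i hy) h]
    exact zero_mem _

/-- Subspaces of the pieces of a grading that already span everything are the whole pieces. -/
theorem eq_of_iSup_eq_top {𝒢 : ℕ → Submodule ℚ M} (h𝒢 : IsInternal 𝒢)
    {L : ℕ → Submodule ℚ M} (hL : ⨆ i, L i = ⊤) (hLG : ∀ i, L i ≤ 𝒢 i) (k : ℕ) : L k = 𝒢 k := by
  obtain ⟨p, hp, hp'⟩ := exists_proj h𝒢
  refine le_antisymm (hLG k) fun x hx => ?_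
  rw [← hp k x hx]
  exact proj_mem h𝒢.submodule_iSup_eq_top hp hp' hL hLG k x

/-- The grading shifted by one: piece `k` is `𝒢 (k - 1)`, and piece `0` is zero. -/
def shift (𝒢 : ℕ → Submodule ℚ M) : ℕ → Submodule ℚ M
  | 0 => ⊥
  | k + 1 => 𝒢 k

/-- A linear map with image condition `W ≤ d(U)` has a linear section over `W` valued in `U`. -/
theorem exists_section_on (d : M →ₗ[ℚ] N) (U : Submodule ℚ M) (W : Submodule ℚ N)
    (hW : W ≤ U.map d) :
    ∃ s : N →ₗ[ℚ] M, (∀ z, s z ∈ U) ∧ ∀ z ∈ W, d (s z) = z := by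
  let f := (d.comp U.subtype).rangeRestrict
  obtain ⟨r, hr⟩ := f.exists_rightInverse_of_surjective (LinearMap.range_rangeRestrict _)
  obtain ⟨s, hs⟩ := LinearMap.exists_extend r
  refine ⟨U.subtype.comp s, fun z => (s z).2, fun z hz => ?_⟩
  obtain ⟨u, hu, rfl⟩ := hW hz
  have hmem : d u ∈ LinearMap.range (d.comp U.subtype) := ⟨⟨u, hu⟩, rfl⟩
  have h1 : s (d u) = r ⟨d u, hmem⟩ := LinearMap.congr_fun hs ⟨d u, hmem⟩
  have h2 := congrArg Subtype.val (LinearMap.congr_fun hr ⟨d u, hmem⟩)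
  simpa [f, h1] using h2

/-- If `f` vanishes on `ker d`, it factors through `d`. -/
theorem exists_factor (d : M →ₗ[ℚ] N) (f : M →ₗ[ℚ] M) (h : ∀ z, d z = 0 → f z = 0) :
    ∃ k : N →ₗ[ℚ] M, ∀ z, k (d z) = f z := by
  obtain ⟨s, -, hs⟩ := exists_section_on d ⊤ (LinearMap.range d)
    (LinearMap.range_eq_map d).le
  refine ⟨f.comp s, fun z => ?_⟩
  have := h (s (d z) - z) (by rw [map_sub, hs _ ⟨z, rfl⟩, sub_self])
  rw [map_sub, sub_eq_zero] at this
  exact this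

/-- A differential compatible with two compatible gradings (raising degree, lowering `low`), and
exact in lower degree `k + 1`, admits maps `g`, `h` with `d g + h d` the identity in lower degree
`k + 1`; moreover `g` takes values in lower degree `k + 2` and lowers degree by one. No condition is
put on `h`, which only enters through cocycles, where it drops out. -/
theorem exists_homotopy {gr low : ℕ → Submodule ℚ M} (hgr : IsInternal gr)
    (hlow : IsInternal low) (hcomp : ∀ k, ⨆ n, low k ⊓ gr n = low k) (d : M →ₗ[ℚ] M)
    (hdgr : ∀ n, ∀ x ∈ gr n, d x ∈ gr (n + 1)) (hdlow : ∀ k, ∀ x ∈ low k, d x ∈ shift low k)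
    (k : ℕ) (hex : ∀ x ∈ low (k + 1), d x = 0 → ∃ y, d y = x) :
    ∃ g h pr : M →ₗ[ℚ] M, (∀ z, g z ∈ low (k + 2)) ∧ (∀ n, ∀ z ∈ gr n, g z ∈ shift gr n) ∧
      (∀ z ∈ low (k + 1), pr z = z) ∧ ∀ z, d (g z) + h (d z) = pr z := by
  obtain ⟨q, hq, hq'⟩ := exists_proj hgr
  obtain ⟨p, hp, hp'⟩ := exists_proj hlow
  have gtop := hgr.submodule_iSup_eq_top
  have ltop := hlow.submodule_iSup_eq_top
  have hqlow : ∀ m k, ∀ x ∈ low k, q m x ∈ low k := fun m k => by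
    have : low k ≤ (low k).comap (q m) := by
      conv_lhs => rw [← hcomp k]
      refine iSup_le fun n x hx => ?_
      rw [Submodule.mem_comap]
      by_cases h : n = m
      · subst h
        rw [hq n x hx.2]
        exact hx.1
      · rw [hq' m n x hx.2 h]
        exact zero_mem _
    exact this
  have hqmem : ∀ m x, q m x ∈ gr m := fun m x => proj_mem gtop hq hq' gtop (fun _ => le_rfl) m x
  have hpmem : ∀ m x, p m x ∈ low m := fun m x => proj_mem ltop hp hp' ltop (fun _ => le_rfl) m x
  have hpgr : ∀ m n, ∀ x ∈ gr n, p m x ∈ gr n := fun m n x hx => by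
    -- the two families of projections commute
    have hcm : ∀ y, p m (q n y) = q n (p m y) := hom_eq_of_homogeneous ltop
      ((p m).comp (q n)) ((q n).comp (p m)) fun i y hy => by
        simp only [LinearMap.comp_apply]
        by_cases h : i = m
        · subst h
          rw [hp i y hy, hp i _ (hqlow n i y hy)]
        · rw [hp' m i y hy h, hp' m i _ (hqlow n i y hy) h, map_zero]
    rw [← hq n x hx, hcm]
    exact hqmem _ _
  have hdq : ∀ n x, q (n + 1) (d x) = d (q n x) := fun n => hom_eq_of_homogeneous gtop
    ((q (n + 1)).comp d) (d.comp (q n)) fun i y hy => by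
      simp only [LinearMap.comp_apply]
      by_cases h : i = n
      · subst h
        rw [hq i y hy, hq _ _ (hdgr _ _ hy)]
      · rw [hq' n i y hy h, hq' _ (i + 1) _ (hdgr _ _ hy) (by omega), map_zero]
  have hdq0 : ∀ x, q 0 (d x) = 0 := hom_eq_of_homogeneous gtop ((q 0).comp d) 0 fun i y hy => by
    simpa using hq' 0 (i + 1) _ (hdgr _ _ hy) (by omega)
  have hdp : ∀ n x, p n (d x) = d (p (n + 1) x) := fun n => hom_eq_of_homogeneous ltop
    ((p n).comp d) (d.comp (p (n + 1))) fun i y hy => by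
      simp only [LinearMap.comp_apply]
      have h1 := hdlow i y hy
      by_cases h : i = n + 1
      · subst h
        rw [hp _ y hy, hp _ _ h1]
      · rw [hp' _ i y hy h, map_zero]
        cases i with
        | zero =>
          have : d y = 0 := h1
          rw [this, map_zero]
        | succ i => exact hp' _ i _ h1 (by omega)
  -- a primitive can be corrected to be bihomogeneous by projecting it
  have key : ∀ n, low (k + 1) ⊓ gr n ⊓ LinearMap.ker d ≤ (low (k + 2) ⊓ shift gr n).map d := by
    rintro n z ⟨⟨hz1, hz2⟩, hz3⟩
    obtain ⟨u, hu⟩ := hex z hz1 hz3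
    cases n with
    | zero =>
      refine ⟨0, zero_mem _, ?_⟩
      rw [map_zero, ← hq 0 z hz2, ← hu, hdq0]
    | succ n =>
      refine ⟨q n (p (k + 2) u), ⟨hqlow _ _ _ (hpmem _ _), hqmem _ _⟩, ?_⟩
      rw [← hdq, ← hdp, hu, hp _ z hz1, hq _ z hz2]
  -- primitives are chosen degree by degree and glued
  choose s hs1 hs2 using fun n => exists_section_on d _ _ (key n)
  obtain ⟨g, hg⟩ := exists_glue hgr (fun n => (s n).comp (p (k + 1)))
  have hg1 : ∀ z, g z ∈ low (k + 2) := fun z =>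
    mem_of_homogeneous gtop ((low (k + 2)).comap g) (fun i y hy => by
      rw [Submodule.mem_comap, hg i y hy]
      exact (hs1 i _).1) z
  have hg2 : ∀ n, ∀ z ∈ gr n, g z ∈ shift gr n := fun n z hz => by
    rw [hg n z hz]
    exact (hs1 n _).2
  have hg3 : ∀ z, d z = 0 → d (g z) = p (k + 1) z := by
    intro z hz
    -- the components of a cocycle are cocycles
    have hqd : ∀ n, d (q n z) = 0 := fun n => by rw [← hdq, hz, map_zero]
    have hdg : ∀ n, d (g (q n z)) = p (k + 1) (q n z) := fun n => by
      rw [hg n _ (hqmem n z)]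
      refine hs2 n _ ⟨⟨hpmem _ _, hpgr _ _ _ (hqmem _ _)⟩, ?_⟩
      change d (p (k + 1) (q n z)) = 0
      rw [← hdp, hqd, map_zero]
    -- so it is enough to see that `z` lies in the span of its components
    have hz' : z ∈ Submodule.span ℚ (Set.range fun n => q n z) := by
      have : ∀ y, y ∈ (⨆ i, gr i) → ∃ t : Finset ℕ, y = ∑ i ∈ t, q i y := by
        intro y hy
        obtain ⟨f, hf, rfl⟩ := (Submodule.mem_iSup_iff_exists_finsupp ..).mp hy
        refine ⟨f.support, ?_⟩
        simp only [Finsupp.sum, map_sum]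
        refine Finset.sum_congr rfl fun i hi => ?_
        rw [Finset.sum_eq_single i, hq i _ (hf i)]
        · intro j _ hji
          exact hq' i j _ (hf j) hji
        · intro h
          exact absurd hi h
      obtain ⟨t, ht⟩ := this z (gtop ▸ Submodule.mem_top)
      have hsum : ∑ i ∈ t, q i z ∈ Submodule.span ℚ (Set.range fun n => q n z) :=
        Submodule.sum_mem _ fun i _ => Submodule.subset_span ⟨i, rfl⟩
      rwa [← ht] at hsum
    have hle : Submodule.span ℚ (Set.range fun n => q n z) ≤
        LinearMap.eqLocus (d.comp g) (p (k + 1)) :=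
      Submodule.span_le.mpr (by rintro _ ⟨n, rfl⟩; exact hdg n)
    exact hle hz'
  obtain ⟨h, hh⟩ := exists_factor d (p (k + 1) - d.comp g) fun z hz => by
    simp [hg3 z hz]
  exact ⟨g, h, p (k + 1), hg1, hg2, hp (k + 1), fun z => by rw [hh]; simp⟩

end Graded


/-- A family of subspaces closed under multiplication (with respect to any indexing) and containing
a set of algebra generators spans the whole algebra. -/
theorem iSup_eq_top_of_mul {A κ : Type} [Ring A] [Algebra ℚ A] {s : Set A}
    (hs : Algebra.adjoin ℚ s = ⊤) (L : κ → Submodule ℚ A) (hone : ∃ i, (1 : A) ∈ L i)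
    (hmul : ∀ i j, ∃ m, ∀ x ∈ L i, ∀ y ∈ L j, x * y ∈ L m) (hgen : ∀ x ∈ s, x ∈ ⨆ i, L i) :
    ⨆ i, L i = ⊤ := by
  have hmul' : ∀ x y, x ∈ ⨆ i, L i → y ∈ ⨆ i, L i → x * y ∈ ⨆ i, L i := by
    intro x y hx hy
    have h : (⨆ i, L i) * (⨆ i, L i) ≤ ⨆ i, L i := by
      rw [Submodule.iSup_mul]
      refine iSup_le fun i => ?_
      rw [Submodule.mul_iSup]
      refine iSup_le fun j => ?_
      obtain ⟨m, hm⟩ := hmul i j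
      exact (Submodule.mul_le.mpr hm).trans (le_iSup L m)
    exact h (Submodule.mul_mem_mul hx hy)
  obtain ⟨i₀, h₀⟩ := hone
  have h1 : (1 : A) ∈ ⨆ i, L i := (le_iSup L i₀) h₀
  let S : Subalgebra ℚ A := (⨆ i, L i).toSubalgebra h1 hmul'
  have hS : Algebra.adjoin ℚ s ≤ S := Algebra.adjoin_le fun x hx => hgen x hx
  rw [hs] at hS
  exact eq_top_iff.mpr fun x _ => hS Algebra.mem_top

/-! ### The two gradings on the fibre -/

section Fiber

variable (BF : BigradedSullivan)

theorem gr_internal (C : CDGA) : IsInternal C.grading := Decomposition.isInternal _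

/-- Multiplicatively closed subspaces `L k n` of the bihomogeneous pieces of `ΛV` that contain the
bihomogeneous generators span everything. -/
theorem bigraded_iSup (L : ℕ → ℕ → Submodule ℚ BF.A)
    (hone : (1 : BF.A) ∈ L 0 0)
    (hmul : ∀ k n l m, ∀ x ∈ L k n, ∀ y ∈ L l m, x * y ∈ L (k + l) (n + m))
    (hV : ∀ k n, BF.V n ⊓ BF.low k ≤ L k n) : ⨆ k, ⨆ n, L k n = ⊤ := by
  have := iSup_eq_top_of_mul BF.generates (fun p : ℕ × ℕ => L p.1 p.2) ⟨(0, 0), hone⟩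
    (fun p q => ⟨p + q, hmul p.1 p.2 q.1 q.2⟩) (by
      intro x hx
      obtain ⟨n, hn⟩ := Set.mem_iUnion.mp hx
      have hn' : x ∈ BF.V n := hn
      rw [BF.V_low n] at hn'
      refine (iSup_le fun k => ?_ : (⨆ k, BF.V n ⊓ BF.low k) ≤ _) hn'
      exact (hV k n).trans (le_iSup (fun p : ℕ × ℕ => L p.1 p.2) (k, n)))
  rwa [iSup_prod] at this

/-- Under the hypotheses of `bigraded_iSup`, if also `L k n` lies in lower degree `k`, then the
`L k n` span exactly the piece of lower degree `k`: the induction principle on lower degree. -/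
theorem bigraded_low (L : ℕ → ℕ → Submodule ℚ BF.A)
    (hone : (1 : BF.A) ∈ L 0 0)
    (hmul : ∀ k n l m, ∀ x ∈ L k n, ∀ y ∈ L l m, x * y ∈ L (k + l) (n + m))
    (hV : ∀ k n, BF.V n ⊓ BF.low k ≤ L k n) (hle : ∀ k n, L k n ≤ BF.low k) (k : ℕ) :
    ⨆ n, L k n = BF.low k :=
  eq_of_iSup_eq_top BF.low_internal (bigraded_iSup BF L hone hmul hV)
    (fun k => iSup_le (hle k)) k

theorem one_mem_gr (C : CDGA) : (1 : C.A) ∈ C.grading 0 := SetLike.GradedOne.one_mem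

theorem mul_mem_gr (C : CDGA) {i j : ℕ} {x y : C.A} (hx : x ∈ C.grading i)
    (hy : y ∈ C.grading j) : x * y ∈ C.grading (i + j) := SetLike.GradedMul.mul_mem hx hy

/-- The degree and the lower degree of `ΛV` are compatible: each lower piece is spanned by
bihomogeneous elements. -/
theorem low_compat (k : ℕ) : ⨆ n, BF.low k ⊓ BF.grading n = BF.low k :=
  bigraded_low BF (fun k n => BF.low k ⊓ BF.grading n) ⟨BF.low_one, one_mem_gr _⟩
    (fun k n l m x hx y hy => ⟨BF.low_mul _ _ _ _ hx.1 hy.1, mul_mem_gr _ hx.2 hy.2⟩)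
    (fun k n => le_inf inf_le_right (inf_le_left.trans (BF.V_le n))) (fun k n => inf_le_left) k

theorem d_low_shift (k : ℕ) (x : BF.A) (hx : x ∈ BF.low k) : BF.d x ∈ shift BF.low k := by
  cases k with
  | zero => exact BF.d_low_zero x hx
  | succ k => exact BF.d_low k x hx

end Fiber

/-! ### The total algebra as a tensor product -/

section Total

variable {B : CDGA} {F : Sullivan} (P : FibrationModel B F)

/-- The projection onto the fibre has a multiplicative section with image `1 ⊗ ΛV`. -/
theorem exists_section : ∃ σ : F.A →ₐ[ℚ] P.T.A, (∀ z, P.proj.toAlgHom (σ z) = z) ∧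
    (∀ z, σ z ∈ P.fiberSub) ∧ ∀ x ∈ P.fiberSub, σ (P.proj.toAlgHom x) = x := by
  let S := Algebra.adjoin ℚ (⋃ i, (P.V i : Set P.T.A))
  let f : S →ₐ[ℚ] F.A := P.proj.toAlgHom.comp S.val
  have hinj : Function.Injective f := by
    rw [injective_iff_map_eq_zero]
    intro x hx
    exact Subtype.ext (P.fiber_inj x.1 x.2 hx)
  have hsurj : Function.Surjective f := by
    rw [← AlgHom.range_eq_top, eq_top_iff, ← F.generates]
    refine Algebra.adjoin_le ?_
    refine Set.iUnion_subset fun i v hv => ?_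
    have hv' : v ∈ (P.V i).map P.proj.toAlgHom.toLinearMap := by
      rw [P.proj_V]
      exact hv
    obtain ⟨w, hw, rfl⟩ := hv'
    exact ⟨⟨w, Algebra.subset_adjoin (Set.mem_iUnion.mpr ⟨i, hw⟩)⟩, rfl⟩
  let e := AlgEquiv.ofBijective f ⟨hinj, hsurj⟩
  refine ⟨S.val.comp e.symm.toAlgHom, fun z => e.apply_symm_apply z, fun z => (e.symm z).2,
    fun x hx => ?_⟩
  exact congrArg Subtype.val (e.symm_apply_apply ⟨x, hx⟩)

variable {P} {σ : F.A →ₐ[ℚ] P.T.A}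

theorem section_V (hσ : ∀ x ∈ P.fiberSub, σ (P.proj.toAlgHom x) = x) {n : ℕ} {v : F.A}
    (hv : v ∈ F.V n) : ∃ w ∈ P.V n, P.proj.toAlgHom w = v ∧ σ v = w := by
  have hv' : v ∈ (P.V n).map P.proj.toAlgHom.toLinearMap := by
    rw [P.proj_V]
    exact hv
  obtain ⟨w, hw, rfl⟩ := hv'
  exact ⟨w, hw, rfl, hσ w (Algebra.subset_adjoin (Set.mem_iUnion.mpr ⟨n, hw⟩))⟩

/-- The section preserves degrees: it does so on generators. -/
theorem section_gr (hσ : ∀ x ∈ P.fiberSub, σ (P.proj.toAlgHom x) = x) {n : ℕ} {z : F.A}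
    (hz : z ∈ F.grading n) : σ z ∈ P.T.grading n := by
  have htop := iSup_eq_top_of_mul F.generates
    (fun n => F.grading n ⊓ (P.T.grading n).comap σ.toLinearMap)
    ⟨0, one_mem_gr _, by simpa using one_mem_gr P.T⟩
    (fun i j => ⟨i + j, fun x hx y hy => ⟨mul_mem_gr _ hx.1 hy.1, by
      have := mul_mem_gr P.T hx.2 hy.2
      simpa using this⟩⟩) (by
      intro x hx
      obtain ⟨i, hi⟩ := Set.mem_iUnion.mp hx
      obtain ⟨w, hw, -, hw'⟩ := section_V hσ hi
      refine (le_iSup (fun n => F.grading n ⊓ (P.T.grading n).comap σ.toLinearMap) i)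
        ⟨F.V_le i hi, ?_⟩
      change σ x ∈ P.T.grading i
      rw [hw']
      exact P.V_le i hw)
  have := eq_of_iSup_eq_top (gr_internal F.toCDGA) htop (fun n => inf_le_left) n
  rw [← this] at hz
  exact hz.2

theorem units_pow_smul {M : Type} [AddCommGroup M] [Module ℚ M] (n : ℕ) (x : M) :
    ((-1 : ℤˣ) ^ n) • x = ((-1 : ℚ) ^ n) • x := by
  rcases Nat.even_or_odd n with h | h <;> simp [h.neg_one_pow]

theorem sign_sq (n : ℕ) : (-1 : ℚ) ^ n * (-1) ^ n = 1 := by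
  rw [← mul_pow]
  simp

open scoped TensorProduct in
open GradedTensorProduct in
/-- The total algebra is `B ⊗ ΛV` as a vector space. The graded tensor product of `B` and `ΛV` maps
to the total algebra by `incl` and `σ`, and relative freeness supplies the inverse. -/
theorem exists_tensorEquiv (hσ : ∀ x ∈ P.fiberSub, σ (P.proj.toAlgHom x) = x) :
    ∃ Φ : (B.A ⊗[ℚ] F.A) ≃ₗ[ℚ] P.T.A, ∀ b z, Φ (b ⊗ₜ z) = P.incl.toAlgHom b * σ z := by
  let C := B.grading ᵍ⊗[ℚ] F.grading
  have hmulC : ∀ {j i' : ℕ} {b b' : B.A} {z z' : F.A}, z ∈ F.grading j →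
      b' ∈ B.grading i' → ((b ᵍ⊗ₜ[ℚ] z : C) * (b' ᵍ⊗ₜ[ℚ] z' : C)) =
        ((-1 : ℚ) ^ (j * i')) • ((b * b') ᵍ⊗ₜ[ℚ] (z * z') : C) := by
    intro j i' b b' z z' hz hb'
    have := tmul_coe_mul_coe_tmul (R := ℚ) B.grading F.grading b ⟨z, hz⟩ ⟨b', hb'⟩ z'
    rw [← units_pow_smul]
    exact this
  -- the total grading of the graded tensor product, for which it is graded commutative
  let 𝒞 : ℕ → Submodule ℚ C := fun n => Submodule.span ℚ
    {t | ∃ i j b z, b ∈ B.grading i ∧ z ∈ F.grading j ∧ i + j = n ∧ t = (b ᵍ⊗ₜ[ℚ] z : C)}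
  have h1 : (1 : C) ∈ 𝒞 0 :=
    Submodule.subset_span ⟨0, 0, 1, 1, one_mem_gr _, one_mem_gr _, rfl, rfl⟩
  have h2 : ∀ i j (x y : C), x ∈ 𝒞 i → y ∈ 𝒞 j → x * y ∈ 𝒞 (i + j) := by
    intro m n x y hx hy
    have h : 𝒞 m * 𝒞 n ≤ 𝒞 (m + n) := by
      rw [Submodule.span_mul_span, Submodule.span_le]
      rintro _ ⟨_, ⟨i, j, b, z, hb, hz, hij, rfl⟩, _, ⟨i', j', b', z', hb', hz', hij', rfl⟩, rfl⟩
      change (b ᵍ⊗ₜ[ℚ] z : C) * (b' ᵍ⊗ₜ[ℚ] z' : C) ∈ 𝒞 (m + n)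
      rw [hmulC hz hb']
      exact Submodule.smul_mem _ _ (Submodule.subset_span ⟨i + i', j + j', _, _,
        mul_mem_gr _ hb hb', mul_mem_gr _ hz hz', by omega, rfl⟩)
    exact h (Submodule.mul_mem_mul hx hy)
  have h3 : ∀ i j (x y : C), x ∈ 𝒞 i → y ∈ 𝒞 j →
      x * y = ((-1 : ℚ) ^ (i * j)) • (y * x) := by
    intro m n x y hx hy
    induction hx, hy using Submodule.span_induction₂ with
    | mem_mem x y hx hy =>
      obtain ⟨i, j, b, z, hb, hz, hij, rfl⟩ := hx
      obtain ⟨i', j', b', z', hb', hz', hij', rfl⟩ := hy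
      rw [hmulC hz hb', hmulC hz' hb, B.gcomm hb hb', F.gcomm hz hz', ← hij, ← hij']
      have hsm : ∀ (r s : ℚ) (a : B.A) (c : F.A),
          ((r • a) ᵍ⊗ₜ[ℚ] (s • c) : C) = (r * s) • (a ᵍ⊗ₜ[ℚ] c : C) := fun r s a c => by
        simp only [tmul]
        rw [TensorProduct.smul_tmul_smul, LinearEquiv.map_smul]
      rw [hsm, smul_smul, smul_smul]
      congr 1
      have e : (i + j) * (i' + j') + j' * i =
          j * i' + (i * i' + j * j') + (i * j' + i * j') := by ring
      rw [← pow_add, ← pow_add, ← pow_add, e, pow_add _ _ (i * j' + i * j'),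
        pow_add _ (i * j'), sign_sq, mul_one]
    | zero_left y hy => simp
    | zero_right x hx => simp
    | add_left x y z hx hy hz h1 h2 => rw [add_mul, mul_add, h1, h2, smul_add]
    | add_right x y z hx hy hz h1 h2 => rw [add_mul, mul_add, h1, h2, smul_add]
    | smul_left r x y hx hy h => rw [smul_mul_assoc, mul_smul_comm, h, smul_comm]
    | smul_right r x y hx hy h => rw [smul_mul_assoc, mul_smul_comm, h, smul_comm]
  have hgB : ∀ i (x : B.A), x ∈ B.grading i → includeLeft B.grading F.grading x ∈ 𝒞 i :=
    fun i x hx => Submodule.subset_span ⟨i, 0, x, 1, hx, one_mem_gr _, rfl, rfl⟩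
  have hgF : ∀ i (v : P.V i), includeRight B.grading F.grading (P.proj.toAlgHom (v : P.T.A)) ∈ 𝒞 i :=
    fun i v => Submodule.subset_span ⟨0, i, 1, _, one_mem_gr _,
      P.proj.map_grading (P.V_le i v.2), by omega, rfl⟩
  obtain ⟨φ, ⟨hφB, hφV⟩, -⟩ := P.relFree C 𝒞 h1 h2 h3 (includeLeft B.grading F.grading) hgB
    (fun i => (includeRight B.grading F.grading).toLinearMap ∘ₗ P.proj.toAlgHom.toLinearMap ∘ₗ
      (P.V i).subtype) hgF
  have hφσ : ∀ z, φ (σ z) = includeRight B.grading F.grading z := by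
    have : φ.comp σ = includeRight B.grading F.grading := by
      refine AlgHom.ext_of_adjoin_eq_top F.generates fun v hv => ?_
      obtain ⟨i, hi⟩ := Set.mem_iUnion.mp hv
      obtain ⟨w, hw, hw1, hw2⟩ := section_V hσ hi
      have := hφV i ⟨w, hw⟩
      simp only [AlgHom.comp_apply, hw2]
      rw [this, ← hw1]
      rfl
    exact fun z => AlgHom.congr_fun this z
  let Ψ : C →ₐ[ℚ] P.T.A := lift B.grading F.grading P.incl.toAlgHom σ (by
    intro i j a b
    have := P.T.gcomm (P.incl.map_grading a.2) (section_gr hσ b.2)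
    rw [mul_comm] at this
    exact this.trans (units_pow_smul _ _).symm)
  have hΨ : ∀ b z, Ψ (b ᵍ⊗ₜ[ℚ] z : C) = P.incl.toAlgHom b * σ z := fun b z => lift_tmul ..
  have hleft : ∀ x, φ (Ψ x) = x := by
    have : φ.comp Ψ = AlgHom.id ℚ C := by
      refine algHom_ext _ _ (AlgHom.ext fun b => ?_) (AlgHom.ext fun z => ?_)
      · change φ (Ψ (b ᵍ⊗ₜ[ℚ] (1 : F.A) : C)) = (b ᵍ⊗ₜ[ℚ] (1 : F.A) : C)
        rw [hΨ, map_one, mul_one, hφB]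
        rfl
      · change φ (Ψ ((1 : B.A) ᵍ⊗ₜ[ℚ] z : C)) = ((1 : B.A) ᵍ⊗ₜ[ℚ] z : C)
        rw [hΨ, map_one, one_mul, hφσ]
        rfl
    exact fun x => AlgHom.congr_fun this x
  have hright : ∀ x, Ψ (φ x) = x := by
    -- both sides extend `incl` and the inclusion of the generators, so uniqueness applies
    obtain ⟨u, -, hu⟩ := P.relFree P.T.A P.T.grading (one_mem_gr _)
      (fun i j x y hx hy => mul_mem_gr _ hx hy) (fun i j x y hx hy => P.T.gcomm hx hy)
      P.incl.toAlgHom (fun i x hx => P.incl.map_grading hx) (fun i => (P.V i).subtype)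
      (fun i v => P.V_le i v.2)
    have e1 := hu (AlgHom.id ℚ P.T.A) ⟨fun x => rfl, fun i v => rfl⟩
    have e2 := hu (Ψ.comp φ) ⟨fun x => by
      rw [AlgHom.comp_apply, hφB]
      change Ψ (x ᵍ⊗ₜ[ℚ] (1 : F.A) : C) = _
      rw [hΨ, map_one, mul_one], fun i v => by
      rw [AlgHom.comp_apply, hφV]
      change Ψ ((1 : B.A) ᵍ⊗ₜ[ℚ] (P.proj.toAlgHom (v : P.T.A)) : C) = _
      rw [hΨ, map_one, one_mul]
      exact hσ _ (Algebra.subset_adjoin (Set.mem_iUnion.mpr ⟨i, v.2⟩))⟩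
    exact fun x => AlgHom.congr_fun (e2.trans e1.symm) x
  let e : C ≃ₗ[ℚ] P.T.A :=
    { Ψ.toLinearMap with invFun := φ, left_inv := hleft, right_inv := hright }
  exact ⟨(of ℚ B.grading F.grading).trans e, hΨ⟩

end Total


/-! ### Acyclicity from a locally nilpotent operator -/

section Abstract

variable {M : Type} [AddCommGroup M] [Module ℚ M]

/-- Let `D G` preserve a grading and let `1 - D G` raise, on a subspace `U` it preserves, an
exhaustive filtration whose `p`-th step lies in degrees at least `p`. Then `1 - D G` is locally
nilpotent on `U`, hence every element of `U` is in the image of `D`. -/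
theorem exact_of_contracting {gr : ℕ → Submodule ℚ M} (hgr : IsInternal gr)
    {fil : ℕ → Submodule ℚ M} (hfil0 : fil 0 = ⊤) (hfil : ∀ p, fil p ≤ ⨆ m, gr (m + p))
    (D G : M →ₗ[ℚ] M) (hDG : ∀ n, ∀ x ∈ gr n, D (G x) ∈ gr n) (U : Submodule ℚ M)
    (hU : ∀ x ∈ U, x - D (G x) ∈ U)
    (hraise : ∀ p, ∀ x ∈ U, x ∈ fil p → x - D (G x) ∈ fil (p + 1)) (x : M) (hx : x ∈ U) :
    ∃ y, D y = x := by
  let W : ℕ → Submodule ℚ M := fun N => ⨆ m ∈ Finset.range N, gr m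
  have hmono : Monotone W := fun a b hab =>
    biSup_mono fun m hm => Finset.mem_range.mpr ((Finset.mem_range.mp hm).trans_le hab)
  have hWtop : ⨆ N, W N = ⊤ := by
    rw [eq_top_iff, ← hgr.submodule_iSup_eq_top]
    refine iSup_le fun m => le_trans ?_ (le_iSup W (m + 1))
    exact le_iSup₂_of_le m (Finset.self_mem_range_succ m) le_rfl
  obtain ⟨N, hN⟩ : ∃ N, x ∈ W N := by
    rw [← Submodule.mem_iSup_of_directed W hmono.directed_le, hWtop]
    exact Submodule.mem_top
  have hWDG : ∀ y ∈ W N, D (G y) ∈ W N := by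
    have : W N ≤ (W N).comap (D.comp G) := iSup₂_le fun m hm y hy =>
      (le_iSup₂_of_le (f := fun m (_ : m ∈ Finset.range N) => gr m) m hm le_rfl) (hDG m y hy)
    exact this
  -- `x - D y` is the `p`-fold iterate of `1 - D G` applied to `x`
  have key : ∀ p, ∃ y, x - D y ∈ U ∧ x - D y ∈ W N ∧ x - D y ∈ fil p := by
    intro p
    induction p with
    | zero => exact ⟨0, by simpa using hx, by simpa using hN, by simp [hfil0]⟩
    | succ p ih =>
      obtain ⟨y, h1, h2, h3⟩ := ih
      have e : x - D (y + G (x - D y)) = (x - D y) - D (G (x - D y)) := by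
        rw [map_add]
        abel
      refine ⟨y + G (x - D y), ?_⟩
      rw [e]
      exact ⟨hU _ h1, Submodule.sub_mem _ h2 (hWDG _ h2), hraise p _ h1 h3⟩
  obtain ⟨y, -, h2, h3⟩ := key N
  refine ⟨y, (sub_eq_zero.mp ?_).symm⟩
  have hdisj : Disjoint (W N) (⨆ m ∈ Set.Ici N, gr m) :=
    hgr.submodule_iSupIndep.disjoint_biSup_biSup (s := (Finset.range N : Set ℕ)) (t := Set.Ici N) (by
      rw [Set.disjoint_left]
      intro m hm hm'
      exact absurd (Finset.mem_range.mp hm) (not_lt.mpr hm'))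
  refine Submodule.disjoint_def.mp hdisj _ h2 ((hfil N).trans (iSup_le fun m => ?_) h3)
  exact le_iSup₂_of_le (f := fun m (_ : m ∈ Set.Ici N) => gr m) (m + N)
    (Nat.le_add_left N m) le_rfl

end Abstract

/-! ### The filtration by base degree -/

section Filtration

variable {B : CDGA} {F : Sullivan} (P : FibrationModel B F)

/-- The filtration `B^{≥ p} ⊗ ΛV` of the total algebra by the degree in the base. -/
def fil (p : ℕ) : Submodule ℚ P.T.A :=
  Submodule.map P.incl.toAlgHom.toLinearMap (⨆ i, B.grading (i + p)) * ⊤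

variable {P} {σ : F.A →ₐ[ℚ] P.T.A}

/-- A subspace containing all `b ⊗ z`, with `b` homogeneous and `z` in given pieces spanning `ΛV`,
is everything. -/
theorem total_induct (hσ : ∀ x ∈ P.fiberSub, σ (P.proj.toAlgHom x) = x)
    {κ : Type} {𝒱 : κ → Submodule ℚ F.A} (h𝒱 : ⨆ k, 𝒱 k = ⊤) (N : Submodule ℚ P.T.A)
    (h : ∀ i, ∀ b ∈ B.grading i, ∀ k, ∀ z ∈ 𝒱 k, P.incl.toAlgHom b * σ z ∈ N) (x : P.T.A) :
    x ∈ N := by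
  obtain ⟨Φ, hΦ⟩ := exists_tensorEquiv hσ
  have h1 : ∀ b z, P.incl.toAlgHom b * σ z ∈ N := by
    intro b z
    refine mem_of_homogeneous (gr_internal B).submodule_iSup_eq_top
      (N.comap ((LinearMap.mulRight ℚ (σ z)).comp P.incl.toAlgHom.toLinearMap))
      (fun i b hb => ?_) b
    change P.incl.toAlgHom b * σ z ∈ N
    have h2 : ⨆ k, 𝒱 k ≤ N.comap
        ((LinearMap.mulLeft ℚ (P.incl.toAlgHom b)).comp σ.toLinearMap) :=
      iSup_le fun k z hz => h i b hb k z hz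
    rw [h𝒱] at h2
    exact h2 Submodule.mem_top
  rw [← Φ.apply_symm_apply x]
  induction Φ.symm x using TensorProduct.induction_on with
  | zero => simp
  | tmul b z => rw [hΦ]; exact h1 b z
  | add a b ha hb => rw [map_add]; exact N.add_mem ha hb

theorem incl_mul_mem_fil {p i : ℕ} (hp : p ≤ i) {b : B.A} (hb : b ∈ B.grading i) (t : P.T.A) :
    P.incl.toAlgHom b * t ∈ fil P p := by
  refine Submodule.mul_mem_mul ⟨b, ?_, rfl⟩ Submodule.mem_top
  refine (le_iSup (fun i => B.grading (i + p)) (i - p)) ?_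
  rwa [Nat.sub_add_cancel hp]

/-- The filtration step `p` is spanned by the `b ⊗ z` with `b` homogeneous of degree at least `p`. -/
theorem fil_le (hσ : ∀ x ∈ P.fiberSub, σ (P.proj.toAlgHom x) = x) (p : ℕ)
    {κ : Type} {𝒱 : κ → Submodule ℚ F.A} (h𝒱 : ⨆ k, 𝒱 k = ⊤)
    (N : Submodule ℚ P.T.A)
    (h : ∀ i, p ≤ i → ∀ b ∈ B.grading i, ∀ k, ∀ z ∈ 𝒱 k, P.incl.toAlgHom b * σ z ∈ N) :
    fil P p ≤ N := by
  refine Submodule.mul_le.mpr ?_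
  rintro _ ⟨b, hb, rfl⟩ t -
  have h1 : ⨆ i, B.grading (i + p) ≤
      N.comap ((LinearMap.mulRight ℚ t).comp P.incl.toAlgHom.toLinearMap) := by
    refine iSup_le fun i b hb => ?_
    refine total_induct hσ h𝒱 (N.comap (LinearMap.mulLeft ℚ (P.incl.toAlgHom b)))
      (fun j b' hb' k z hz => ?_) t
    change P.incl.toAlgHom b * (P.incl.toAlgHom b' * σ z) ∈ N
    rw [← mul_assoc, ← map_mul]
    exact h (i + p + j) (by omega) _ (mul_mem_gr _ hb hb') k z hz
  exact h1 hb

theorem top_const {M : Type} [AddCommGroup M] [Module ℚ M] :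
    ⨆ _ : Unit, (⊤ : Submodule ℚ M) = ⊤ := iSup_const

theorem incl_mul_fil (hσ : ∀ x ∈ P.fiberSub, σ (P.proj.toAlgHom x) = x) {i q : ℕ} {b : B.A}
    (hb : b ∈ B.grading i) {t : P.T.A} (ht : t ∈ fil P q) :
    P.incl.toAlgHom b * t ∈ fil P (i + q) := by
  refine fil_le hσ q top_const ((fil P (i + q)).comap (LinearMap.mulLeft ℚ (P.incl.toAlgHom b)))
    (fun j hj b' hb' _ z _ => ?_) ht
  change P.incl.toAlgHom b * (P.incl.toAlgHom b' * σ z) ∈ fil P (i + q)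
  rw [← mul_assoc, ← map_mul]
  exact incl_mul_mem_fil (by omega) (mul_mem_gr _ hb hb') _

theorem fil_anti (hσ : ∀ x ∈ P.fiberSub, σ (P.proj.toAlgHom x) = x) {p q : ℕ} (h : p ≤ q) :
    fil P q ≤ fil P p :=
  fil_le hσ q top_const _ fun _ hi _ hb _ _ _ => incl_mul_mem_fil (h.trans hi) hb _

theorem fil_zero (hσ : ∀ x ∈ P.fiberSub, σ (P.proj.toAlgHom x) = x) : fil P 0 = ⊤ :=
  eq_top_iff.mpr fun x _ => total_induct hσ top_const _
    (fun _ _ hb _ _ _ => incl_mul_mem_fil (Nat.zero_le _) hb _) x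

theorem fil_le_grading (hσ : ∀ x ∈ P.fiberSub, σ (P.proj.toAlgHom x) = x) (p : ℕ) :
    fil P p ≤ ⨆ m, P.T.grading (m + p) := by
  refine fil_le hσ p (gr_internal F.toCDGA).submodule_iSup_eq_top _ fun i hi b hb j z hz => ?_
  refine (le_iSup (fun m => P.T.grading (m + p)) (i + j - p)) ?_
  have e : i + j - p + p = i + j := by omega
  change P.incl.toAlgHom b * σ z ∈ P.T.grading (i + j - p + p)
  rw [e]
  exact mul_mem_gr _ (P.incl.map_grading hb) (section_gr hσ hz)

/-- The total differential extends the fibre differential up to terms of positive base degree. -/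
theorem d_section_sub (hσ' : ∀ z, P.proj.toAlgHom (σ z) = z) (z : F.A) :
    P.T.d (σ z) - σ (F.d z) ∈ fil P 1 := by
  refine (P.ker_proj _).mp ?_
  rw [map_sub, P.proj.comm_d, hσ', hσ', sub_self]

/-- The degree `n` part of the total algebra is spanned by the `b ⊗ z` of total degree `n`. -/
theorem total_grading_le (hσ : ∀ x ∈ P.fiberSub, σ (P.proj.toAlgHom x) = x) (n : ℕ)
    (N : Submodule ℚ P.T.A)
    (h : ∀ i j, i + j = n → ∀ b ∈ B.grading i, ∀ z ∈ F.grading j, P.incl.toAlgHom b * σ z ∈ N) :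
    P.T.grading n ≤ N := by
  have := eq_of_iSup_eq_top (gr_internal P.T) (L := fun n => Submodule.span ℚ
    {t | ∃ i j, i + j = n ∧ ∃ b ∈ B.grading i, ∃ z ∈ F.grading j, t = P.incl.toAlgHom b * σ z})
    (eq_top_iff.mpr fun x _ => total_induct hσ (gr_internal F.toCDGA).submodule_iSup_eq_top _
      (fun i b hb j z hz => (le_iSup (fun n => Submodule.span ℚ
        {t | ∃ i j, i + j = n ∧ ∃ b ∈ B.grading i, ∃ z ∈ F.grading j,
          t = P.incl.toAlgHom b * σ z}) (i + j))
        (Submodule.subset_span ⟨i, j, rfl, b, hb, z, hz, rfl⟩)) x)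
    (fun n => Submodule.span_le.mpr (by
      rintro _ ⟨i, j, rfl, b, hb, z, hz, rfl⟩
      exact mul_mem_gr _ (P.incl.map_grading hb) (section_gr hσ hz))) n
  rw [← this, Submodule.span_le]
  rintro _ ⟨i, j, hij, b, hb, z, hz, rfl⟩
  exact h i j hij b hb z hz

/-- Linear maps of `B` and of `ΛV` have a tensor product on `B ⊗ ΛV`. -/
theorem exists_map (hσ : ∀ x ∈ P.fiberSub, σ (P.proj.toAlgHom x) = x) (s : B.A →ₗ[ℚ] B.A)
    (g : F.A →ₗ[ℚ] F.A) : ∃ G : P.T.A →ₗ[ℚ] P.T.A,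
      ∀ b z, G (P.incl.toAlgHom b * σ z) = P.incl.toAlgHom (s b) * σ (g z) := by
  obtain ⟨Φ, hΦ⟩ := exists_tensorEquiv hσ
  refine ⟨Φ.toLinearMap ∘ₗ TensorProduct.map s g ∘ₗ Φ.symm.toLinearMap, fun b z => ?_⟩
  have : Φ.symm (P.incl.toAlgHom b * σ z) = TensorProduct.tmul ℚ b z := by
    rw [LinearEquiv.symm_apply_eq, hΦ]
  simp [this, hΦ]

theorem d_incl_mul (hB : B.ZeroDiff) {i : ℕ} {b : B.A} (hb : b ∈ B.grading i) (t : P.T.A) :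
    P.T.d (P.incl.toAlgHom b * t) = ((-1 : ℚ) ^ i) • (P.incl.toAlgHom b * P.T.d t) := by
  rw [P.T.leibniz _ _ (P.incl.map_grading hb), ← P.incl.comm_d, hB b, map_zero, zero_mul,
    zero_add]

end Filtration

/-! ### The lower grading of the total algebra -/

section Bigraded

variable {HB : CDGA} {BF : BigradedSullivan} (P : FibrationModel HB BF.toSullivan)

/-- The lower grading `H(B) ⊗ (ΛV)_k` of the total algebra. -/
def tlow (k : ℕ) : Submodule ℚ P.T.A := P.baseSub * P.fiberComap (BF.low k)

variable {P} {σ : BF.A →ₐ[ℚ] P.T.A}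

theorem incl_mul_mem_tlow (hσ' : ∀ z, P.proj.toAlgHom (σ z) = z) (hσf : ∀ z, σ z ∈ P.fiberSub)
    {k : ℕ} (b : HB.A) {z : BF.A} (hz : z ∈ BF.low k) : P.incl.toAlgHom b * σ z ∈ tlow P k := by
  refine Submodule.mul_mem_mul ⟨b, rfl⟩ ⟨hσf z, ?_⟩
  change P.proj.toAlgHom (σ z) ∈ BF.low k
  rwa [hσ']

theorem section_mem_tlow (hσ' : ∀ z, P.proj.toAlgHom (σ z) = z) (hσf : ∀ z, σ z ∈ P.fiberSub)
    {k : ℕ} {z : BF.A} (hz : z ∈ BF.low k) : σ z ∈ tlow P k := by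
  simpa using incl_mul_mem_tlow hσ' hσf 1 hz

/-- The lower piece `k` is spanned by the `b ⊗ z` with `b` homogeneous and `z` bihomogeneous of
lower degree `k`. -/
theorem tlow_le (hσ : ∀ x ∈ P.fiberSub, σ (P.proj.toAlgHom x) = x) (k : ℕ)
    (N : Submodule ℚ P.T.A)
    (h : ∀ i, ∀ b ∈ HB.grading i, ∀ j, ∀ z ∈ BF.low k, z ∈ BF.grading j →
      P.incl.toAlgHom b * σ z ∈ N) : tlow P k ≤ N := by
  refine Submodule.mul_le.mpr ?_
  rintro _ ⟨b, rfl⟩ t ⟨ht1, ht2⟩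
  have ht2' : P.proj.toAlgHom t ∈ BF.low k := ht2
  rw [← hσ t ht1]
  refine mem_of_homogeneous (gr_internal HB).submodule_iSup_eq_top
    (N.comap ((LinearMap.mulRight ℚ (σ (P.proj.toAlgHom t))).comp P.incl.toAlgHom.toLinearMap))
    (fun i b hb => ?_) b
  have h2 : ⨆ n, BF.low k ⊓ BF.grading n ≤ N.comap
      ((LinearMap.mulLeft ℚ (P.incl.toAlgHom b)).comp σ.toLinearMap) :=
    iSup_le fun j z hz => h i b hb j z hz.1 hz.2
  rw [low_compat] at h2
  exact h2 ht2'

theorem tlow_iSup (hσ : ∀ x ∈ P.fiberSub, σ (P.proj.toAlgHom x) = x)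
    (hσ' : ∀ z, P.proj.toAlgHom (σ z) = z) (hσf : ∀ z, σ z ∈ P.fiberSub) :
    ⨆ k, tlow P k = ⊤ :=
  eq_top_iff.mpr fun x _ => total_induct hσ BF.low_internal.submodule_iSup_eq_top _
    (fun _ b _ k _ hz => le_iSup (tlow P) k (incl_mul_mem_tlow hσ' hσf b hz)) x

theorem tlow_mul (hσ : ∀ x ∈ P.fiberSub, σ (P.proj.toAlgHom x) = x)
    (hσ' : ∀ z, P.proj.toAlgHom (σ z) = z) (hσf : ∀ z, σ z ∈ P.fiberSub) {k l : ℕ}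
    {x y : P.T.A} (hx : x ∈ tlow P k) (hy : y ∈ tlow P l) : x * y ∈ tlow P (k + l) := by
  refine tlow_le hσ k ((tlow P (k + l)).comap (LinearMap.mulRight ℚ y))
    (fun i b hb j z hz hzj => ?_) hx
  refine tlow_le hσ l ((tlow P (k + l)).comap
    (LinearMap.mulLeft ℚ (P.incl.toAlgHom b * σ z))) (fun i' b' hb' j' z' hz' _ => ?_) hy
  change P.incl.toAlgHom b * σ z * (P.incl.toAlgHom b' * σ z') ∈ tlow P (k + l)
  have e : P.incl.toAlgHom b * σ z * (P.incl.toAlgHom b' * σ z') =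
      ((-1 : ℚ) ^ (j * i')) • (P.incl.toAlgHom (b * b') * σ (z * z')) := by
    rw [map_mul, map_mul, mul_assoc, ← mul_assoc (σ z),
      P.T.gcomm (section_gr hσ hzj) (P.incl.map_grading hb'), smul_mul_assoc, mul_smul_comm]
    simp only [mul_assoc]
  rw [e]
  exact Submodule.smul_mem _ _ (incl_mul_mem_tlow hσ' hσf _ (BF.low_mul _ _ _ _ hz hz'))

theorem shift_tlow_mul (hσ : ∀ x ∈ P.fiberSub, σ (P.proj.toAlgHom x) = x)
    (hσ' : ∀ z, P.proj.toAlgHom (σ z) = z) (hσf : ∀ z, σ z ∈ P.fiberSub) {k l : ℕ}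
    {x y : P.T.A} (hx : x ∈ shift (tlow P) k) (hy : y ∈ tlow P l) :
    x * y ∈ shift (tlow P) (k + l) := by
  cases k with
  | zero =>
    have : x = 0 := hx
    simp [this]
  | succ k =>
    rw [Nat.add_right_comm]
    exact tlow_mul hσ hσ' hσf hx hy

theorem tlow_mul_shift (hσ : ∀ x ∈ P.fiberSub, σ (P.proj.toAlgHom x) = x)
    (hσ' : ∀ z, P.proj.toAlgHom (σ z) = z) (hσf : ∀ z, σ z ∈ P.fiberSub) {k l : ℕ}
    {x y : P.T.A} (hx : x ∈ tlow P k) (hy : y ∈ shift (tlow P) l) :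
    x * y ∈ shift (tlow P) (k + l) := by
  cases l with
  | zero =>
    have : y = 0 := hy
    simp [this]
  | succ l => exact tlow_mul hσ hσ' hσf hx hy

/-- In a two-stage model there are no generators of lower degree at least two. -/
theorem V_low_eq_zero (hTwoStage : BF.toSullivan.genSpan ≤ BF.low 0 ⊔ BF.low 1) {k n : ℕ}
    {v : BF.A} (hv : v ∈ BF.V n) (hk : v ∈ BF.low (k + 2)) : v = 0 := by
  obtain ⟨p, hp, hp'⟩ := exists_proj BF.low_internal
  obtain ⟨a, ha, b, hb, hab⟩ := Submodule.mem_sup.mp (hTwoStage (le_iSup BF.V n hv))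
  rw [← hp _ _ hk, ← hab, map_add, hp' _ 0 a ha (by omega), hp' _ 1 b hb (by omega), add_zero]

/-- `D` lowers the lower degree of `1 ⊗ ΛV` by one: this holds on generators, and both sides are
compatible with products. -/
theorem d_section_mem (hσ : ∀ x ∈ P.fiberSub, σ (P.proj.toAlgHom x) = x)
    (hσ' : ∀ z, P.proj.toAlgHom (σ z) = z) (hσf : ∀ z, σ z ∈ P.fiberSub)
    (hTwoStage : BF.toSullivan.genSpan ≤ BF.low 0 ⊔ BF.low 1)
    (hD0 : ∀ i : ℕ, ∀ v ∈ P.V i, P.proj.toAlgHom v ∈ BF.low 0 → P.T.d v = 0)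
    (hD1 : ∀ i : ℕ, ∀ v ∈ P.V i, P.proj.toAlgHom v ∈ BF.low 1 → P.T.d v ∈ tlow P 0)
    {k : ℕ} {z : BF.A} (hz : z ∈ BF.low k) : P.T.d (σ z) ∈ shift (tlow P) k := by
  have h := bigraded_low BF (fun k n => BF.low k ⊓ BF.grading n ⊓
    (shift (tlow P) k).comap (P.T.d.comp σ.toLinearMap)) ?_ ?_ ?_
    (fun k n => inf_le_left.trans inf_le_left) k
  · rw [← h] at hz
    exact (iSup_le (fun n => inf_le_right) : _ ≤ (shift (tlow P) k).comap
      (P.T.d.comp σ.toLinearMap)) hz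
  · refine ⟨⟨BF.low_one, one_mem_gr _⟩, ?_⟩
    have h1 : P.T.d 1 = 0 := by
      have := P.T.leibniz 1 1 (one_mem_gr P.T)
      simpa using this
    change P.T.d (σ 1) ∈ shift (tlow P) 0
    rw [map_one, h1]
    exact Submodule.zero_mem _
  · rintro k n l m x ⟨⟨hx1, hx2⟩, hx3⟩ y ⟨⟨hy1, hy2⟩, hy3⟩
    refine ⟨⟨BF.low_mul _ _ _ _ hx1 hy1, mul_mem_gr _ hx2 hy2⟩, ?_⟩
    change P.T.d (σ (x * y)) ∈ shift (tlow P) (k + l)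
    rw [map_mul, P.T.leibniz _ _ (section_gr hσ hx2)]
    exact Submodule.add_mem _
      (shift_tlow_mul hσ hσ' hσf hx3 (section_mem_tlow hσ' hσf hy1))
      (Submodule.smul_mem _ _ (tlow_mul_shift hσ hσ' hσf (section_mem_tlow hσ' hσf hx1) hy3))
  · rintro k n v ⟨hv, hk⟩
    refine ⟨⟨hk, BF.V_le n hv⟩, ?_⟩
    change P.T.d (σ v) ∈ shift (tlow P) k
    obtain ⟨w, hw, hw1, hw2⟩ := section_V hσ hv
    rw [hw2]
    match k with
    | 0 => exact hD0 n w hw (hw1 ▸ hk)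
    | 1 => exact hD1 n w hw (hw1 ▸ hk)
    | k + 2 =>
      rw [← hw2, V_low_eq_zero hTwoStage hv hk, map_zero, map_zero]
      exact Submodule.zero_mem _

/-- `D` lowers the lower degree by one, because it is linear over `H(B)` up to sign. -/
theorem d_tlow (hσ : ∀ x ∈ P.fiberSub, σ (P.proj.toAlgHom x) = x)
    (hσ' : ∀ z, P.proj.toAlgHom (σ z) = z) (hσf : ∀ z, σ z ∈ P.fiberSub) (hHB : HB.ZeroDiff)
    (hd : ∀ k, ∀ z ∈ BF.low k, P.T.d (σ z) ∈ shift (tlow P) k) (k : ℕ) :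
    tlow P k ≤ (shift (tlow P) k).comap P.T.d := by
  refine tlow_le hσ k _ fun i b hb j z hz _ => ?_
  change P.T.d (P.incl.toAlgHom b * σ z) ∈ shift (tlow P) k
  rw [d_incl_mul hHB hb]
  refine Submodule.smul_mem _ _ ?_
  have hb0 : P.incl.toAlgHom b ∈ tlow P 0 := by
    simpa using incl_mul_mem_tlow hσ' hσf b BF.low_one
  simpa using tlow_mul_shift hσ hσ' hσf hb0 (hd k z hz)

/-- Acyclicity in positive lower degree. A contracting homotopy `g` of `ΛV` in lower degree `k + 1`
is extended to `G` on `H(B) ⊗ ΛV`; since `D` is the fibre differential modulo `H(B)^{≥ 1} ⊗ ΛV`, the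
operator `1 - D G` raises the base filtration on cocycles. -/
theorem exact_of_mem_tlow (hσ : ∀ x ∈ P.fiberSub, σ (P.proj.toAlgHom x) = x)
    (hσ' : ∀ z, P.proj.toAlgHom (σ z) = z) (hσf : ∀ z, σ z ∈ P.fiberSub) (hHB : HB.ZeroDiff)
    (hdT : ∀ k, tlow P k ≤ (shift (tlow P) k).comap P.T.d) (k : ℕ) {x : P.T.A}
    (hx : x ∈ tlow P (k + 1)) (hdx : P.T.d x = 0) : ∃ y, P.T.d y = x := by
  obtain ⟨g, h, pr, hg, hggr, hpr, hgh⟩ := exists_homotopy (gr_internal BF.toCDGA)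
    BF.low_internal (low_compat BF) BF.d (fun n x hx => BF.d_mem hx) (d_low_shift BF) k
    (BF.acyclic_plus k)
  -- the sign `s` makes `D (s b ⊗ z) = b ⊗ D z`, as `D` anticommutes with odd elements of the base
  obtain ⟨s, hs⟩ := exists_glue (gr_internal HB)
    fun i => ((-1 : ℚ) ^ i) • (LinearMap.id : HB.A →ₗ[ℚ] HB.A)
  obtain ⟨G, hG⟩ := exists_map hσ s g
  obtain ⟨H, hH⟩ := exists_map hσ s h
  obtain ⟨ϖ, hϖ⟩ := exists_map hσ LinearMap.id pr
  have hs' : ∀ (f : P.T.A →ₗ[ℚ] P.T.A) (f' : BF.A →ₗ[ℚ] BF.A),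
      (∀ b z, f (P.incl.toAlgHom b * σ z) = P.incl.toAlgHom (s b) * σ (f' z)) →
      ∀ i, ∀ b ∈ HB.grading i, ∀ z, f (P.incl.toAlgHom b * σ z) =
        ((-1 : ℚ) ^ i) • (P.incl.toAlgHom b * σ (f' z)) := by
    intro f f' hf i b hb z
    rw [hf, hs i b hb]
    simp
  have hG' := hs' G g hG
  have hH' := hs' H h hH
  have hDG : ∀ i, ∀ b ∈ HB.grading i, ∀ z, P.T.d (G (P.incl.toAlgHom b * σ z)) =
      P.incl.toAlgHom b * P.T.d (σ (g z)) := by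
    intro i b hb z
    rw [hG' i b hb, LinearMap.map_smul, d_incl_mul hHB hb, smul_smul, sign_sq, one_smul]
  have hϖid : tlow P (k + 1) ≤ LinearMap.eqLocus ϖ LinearMap.id :=
    tlow_le hσ _ _ fun i b _ j z hz _ => by
      change ϖ (P.incl.toAlgHom b * σ z) = P.incl.toAlgHom b * σ z
      rw [hϖ, hpr z hz]
      rfl
  have hHfil : ∀ p, fil P p ≤ (fil P p).comap H := fun p =>
    fil_le hσ p top_const _ fun i hi b hb _ z _ => by
      change H (P.incl.toAlgHom b * σ z) ∈ fil P p
      rw [hH' i b hb]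
      exact Submodule.smul_mem _ _ (incl_mul_mem_fil hi hb _)
  have hGlow : ∀ y, G y ∈ tlow P (k + 2) := total_induct hσ top_const
    ((tlow P (k + 2)).comap G) fun i b hb _ z _ => by
      change G (P.incl.toAlgHom b * σ z) ∈ tlow P (k + 2)
      rw [hG]
      exact incl_mul_mem_tlow hσ' hσf _ (hg z)
  have hDGgr : ∀ n, P.T.grading n ≤ (P.T.grading n).comap (P.T.d.comp G) := fun n =>
    total_grading_le hσ n _ fun i j hij b hb z hz => by
      change P.T.d (G (P.incl.toAlgHom b * σ z)) ∈ P.T.grading n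
      rw [hDG i b hb]
      have hz' := hggr j z hz
      cases j with
      | zero =>
        have : g z = 0 := hz'
        simp [this]
      | succ j =>
        rw [← hij]
        exact mul_mem_gr _ (P.incl.map_grading hb) (P.T.d_mem (section_gr hσ hz'))
  -- `D G + H D` is `1 ⊗ pr` modulo one further step of the filtration
  have hkey : ∀ p, fil P p ≤ (fil P (p + 1)).comap (P.T.d.comp G + H.comp P.T.d - ϖ) := fun p =>
    fil_le hσ p top_const _ fun i hi b hb _ z _ => by
      have e1 : P.T.d (σ (g z)) = σ (BF.d (g z)) + (P.T.d (σ (g z)) - σ (BF.d (g z))) := by abel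
      have e2 : P.T.d (σ z) = σ (BF.d z) + (P.T.d (σ z) - σ (BF.d z)) := by abel
      have h1 := incl_mul_fil hσ hb (d_section_sub hσ' (g z))
      have h2 := hHfil _ (incl_mul_fil hσ hb (d_section_sub hσ' z))
      have e3 : (P.T.d.comp G + H.comp P.T.d - ϖ) (P.incl.toAlgHom b * σ z) =
          P.incl.toAlgHom b * (P.T.d (σ (g z)) - σ (BF.d (g z))) +
          ((-1 : ℚ) ^ i) • H (P.incl.toAlgHom b * (P.T.d (σ z) - σ (BF.d z))) := by
        change P.T.d (G (P.incl.toAlgHom b * σ z)) + H (P.T.d (P.incl.toAlgHom b * σ z)) -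
          ϖ (P.incl.toAlgHom b * σ z) = _
        rw [hDG i b hb, d_incl_mul hHB hb, hϖ, ← hgh z, LinearMap.map_smul, mul_sub, mul_sub,
          map_sub, hH' i b hb, smul_sub, smul_smul, sign_sq, one_smul, map_add, mul_add]
        change _ + _ - (P.incl.toAlgHom b * _ + P.incl.toAlgHom b * _) = _
        abel
      rw [Submodule.mem_comap, e3]
      exact fil_anti hσ (by omega : p + 1 ≤ i + 1)
        (Submodule.add_mem _ h1 (Submodule.smul_mem _ _ h2))
  refine exact_of_contracting (gr_internal P.T) (fil_zero hσ) (fil_le_grading hσ) P.T.d G hDGgr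
    (tlow P (k + 1) ⊓ LinearMap.ker P.T.d) ?_ ?_ x ⟨hx, hdx⟩
  · rintro y ⟨hy, hdy⟩
    refine ⟨Submodule.sub_mem _ hy (hdT (k + 2) (hGlow y)), ?_⟩
    change P.T.d (y - P.T.d (G y)) = 0
    rw [map_sub, P.T.d_sq, sub_zero]
    exact hdy
  · rintro p y ⟨hy, hdy⟩ hyp
    have h1 : P.T.d (G y) + H (P.T.d y) - ϖ y ∈ fil P (p + 1) := hkey p hyp
    have h2 : P.T.d y = 0 := hdy
    have h3 : ϖ y = y := hϖid hy
    rw [h2, map_zero, add_zero, h3] at h1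
    rw [← neg_sub]
    exact Submodule.neg_mem _ h1

end Bigraded

end RHT.Lower

open RHT in
/-- from the proof of Proposition 3.2.  Let `F → E → B` be a TNCZ
rational fibration with `B` formal and `F` formal and elliptic, so that the bigraded
model of `F` is two-stage, `V = V_0 ⊕ V_1`.  Let `H(B),0 → H(B) ⊗ ΛV, D → ΛV, d` be a
filtered model with `D(V_0) = 0` and `D(V_1) ⊆ H(B) ⊗ (ΛV)_0`.  Then `H(B) ⊗ ΛV, D` is
a bigraded DG algebra for the lower grading `(H(B) ⊗ ΛV)_k = H(B) ⊗ (ΛV)_k`, and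
`H_+(H(B) ⊗ ΛV, D) = 0`: every `D`-cocycle of positive lower degree is a
`D`-coboundary. -/
theorem halperin_variations_stmt4
    (SB : Sullivan) (hSBmin : SB.Minimal) (hSBformal : Formal SB.toCDGA)
    (BF : BigradedSullivan) (hBFmin : BF.toSullivan.Minimal)
    (hBFformal : Formal BF.toCDGA) (hBFell : BF.toSullivan.Elliptic)
    (hTwoStage : BF.toSullivan.genSpan ≤ BF.low 0 ⊔ BF.low 1)
    (HB : CDGA) (hHB : HB.ZeroDiff) (ψ : Hom SB.toCDGA HB) (hψ : QuasiIso ψ)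
    (P : FibrationModel HB BF.toSullivan)
    (htncz : P.TNCZ)
    (hD0 : ∀ i : ℕ, ∀ v ∈ P.V i, P.proj.toAlgHom v ∈ BF.low 0 → P.T.d v = 0)
    (hD1 : ∀ i : ℕ, ∀ v ∈ P.V i, P.proj.toAlgHom v ∈ BF.low 1 →
      P.T.d v ∈ P.baseSub * P.fiberComap (BF.low 0)) :
    -- the lower grading on `H(B) ⊗ ΛV`
    (⨆ k, P.baseSub * P.fiberComap (BF.low k)) = ⊤ ∧
    (∀ k l : ℕ, ∀ x ∈ P.baseSub * P.fiberComap (BF.low k),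
      ∀ y ∈ P.baseSub * P.fiberComap (BF.low l),
        x * y ∈ P.baseSub * P.fiberComap (BF.low (k + l))) ∧
    -- `D` is bigraded: it lowers the lower degree by exactly one
    (∀ x ∈ P.baseSub * P.fiberComap (BF.low 0), P.T.d x = 0) ∧
    (∀ k : ℕ, ∀ x ∈ P.baseSub * P.fiberComap (BF.low (k + 1)),
      P.T.d x ∈ P.baseSub * P.fiberComap (BF.low k)) ∧
    -- `H_+ = 0`
    (∀ k : ℕ, ∀ x ∈ P.baseSub * P.fiberComap (BF.low (k + 1)),
      P.T.d x = 0 → CDGA.IsExact P.T x) := by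
  obtain ⟨σ, hσ', hσf, hσ⟩ := Lower.exists_section P
  have hd : ∀ k, ∀ z ∈ BF.low k, P.T.d (σ z) ∈ Lower.shift (Lower.tlow P) k := fun k z hz =>
    Lower.d_section_mem hσ hσ' hσf hTwoStage hD0 hD1 hz
  have hdT := Lower.d_tlow hσ hσ' hσf hHB hd
  exact ⟨Lower.tlow_iSup hσ hσ' hσf, fun k l x hx y hy => Lower.tlow_mul hσ hσ' hσf hx hy,
    fun x hx => hdT 0 hx, fun k x hx => hdT (k + 1) hx,
    fun k x hx hdx => Lower.exact_of_mem_tlow hσ hσ' hσf hHB hdT k hx hdx⟩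
end

section
/- Let F be elliptic with positive Euler characteristic and let F → E → S^{2n+1} (n ≥ 1) be a rational fibration. If the total space E is formal, then the fibration is TNCZ. -/
namespace RHT

/-! ### Homogeneous components -/

/-- The degree `i` component of an element, as a linear projection. -/
noncomputable def CDGA.component (C : CDGA) (i : ℕ) : C.A →ₗ[ℚ] C.A :=
  GradedAlgebra.proj C.grading i

lemma CDGA.component_mem (C : CDGA) (i : ℕ) (x : C.A) : C.component i x ∈ C.grading i := by
  simp [CDGA.component, GradedAlgebra.proj_apply]

lemma CDGA.component_same (C : CDGA) {i : ℕ} {x : C.A} (hx : x ∈ C.grading i) :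
    C.component i x = x := by
  simpa [CDGA.component, GradedAlgebra.proj_apply] using
    DirectSum.decompose_of_mem_same C.grading hx

lemma CDGA.component_ne (C : CDGA) {i j : ℕ} {x : C.A} (hx : x ∈ C.grading i) (hij : i ≠ j) :
    C.component j x = 0 := by
  simpa [CDGA.component, GradedAlgebra.proj_apply] using
    DirectSum.decompose_of_mem_ne C.grading hx hij

lemma component_map {C D : CDGA} (g : C.A →ₗ[ℚ] D.A) (k : ℕ)
    (hg : ∀ i x, x ∈ C.grading i → g x ∈ D.grading (i + k)) (i : ℕ) (x : C.A) :
    D.component (i + k) (g x) = g (C.component i x) := by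
  induction x using DirectSum.Decomposition.inductionOn C.grading with
  | zero => simp
  | @homogeneous j y =>
    by_cases h : j = i
    · subst h
      rw [C.component_same y.2, D.component_same (hg _ _ y.2)]
    · rw [C.component_ne y.2 h, D.component_ne (hg _ _ y.2) (by omega), map_zero]
  | add a b ha hb => simp only [map_add, ha, hb]

lemma CDGA.component_d (C : CDGA) (i : ℕ) (x : C.A) :
    C.component (i + 1) (C.d x) = C.d (C.component i x) :=
  component_map C.d 1 (fun _ _ h => C.d_mem h) i x

lemma Hom.component {C D : CDGA} (f : Hom C D) (i : ℕ) (x : C.A) :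
    D.component i (f.toAlgHom x) = f.toAlgHom (C.component i x) :=
  component_map f.toAlgHom.toLinearMap 0 (fun _ _ h => f.map_grading h) i x

lemma CDGA.sq_eq_zero_of_odd (C : CDGA) {m : ℕ} (hm : Odd m) {x : C.A}
    (hx : x ∈ C.grading m) : x * x = 0 := by
  have h := C.gcomm hx hx
  rw [Odd.neg_one_pow (hm.mul hm), neg_one_smul] at h
  have h2 : (2 : ℚ) • (x * x) = 0 := by
    rw [two_smul]
    nth_rewrite 1 [h]
    exact neg_add_cancel _
  exact (smul_eq_zero.mp h2).resolve_left two_ne_zero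

/-! ### The Wang-sequence argument -/

/-- Formality of `T` makes `H(T) → H(F)` surjective as soon as `F` is the quotient of `T` by
the ideal of an odd cocycle `U` of degree at least `3` whose annihilator lies in that ideal, and
`H(F)` vanishes in large degrees. -/
theorem surjective_of_formal {T F : CDGA} (p : Hom T F) (n : ℕ) (hn : 1 ≤ n) (U : T.A)
    (hU : U ∈ T.grading (2 * n + 1)) (hdU : T.d U = 0)
    (psurj : Function.Surjective p.toAlgHom)
    (pU : p.toAlgHom U = 0)
    (hker : ∀ x, p.toAlgHom x = 0 → ∃ s, x = U * s)
    (hann : ∀ t, U * t = 0 → p.toAlgHom t = 0)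
    (N : ℕ) (hN : ∀ i, N ≤ i → ∀ y ∈ F.grading i, F.d y = 0 → F.IsExact y)
    (hT : Formal T) (y : F.A) (hy : F.d y = 0) :
    ∃ x : T.A, T.d x = 0 ∧ F.IsExact (p.toAlgHom x - y) := by
  obtain ⟨H, f, hH, hsurj, hinj⟩ := hT
  have hUU : U * U = 0 := T.sq_eq_zero_of_odd ⟨n, rfl⟩ hU
  have hdUmul : ∀ t, T.d (U * t) = - (U * T.d t) := by
    intro t
    rw [T.leibniz U t hU, hdU, Odd.neg_one_pow ⟨n, rfl⟩]
    simp
  -- Every homogeneous element can be corrected by a homogeneous cocycle to lie in `ker f`.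
  have corr : ∀ i, ∀ t ∈ T.grading i, ∃ x ∈ T.grading i, T.d x = 0 ∧
      f.toAlgHom (t - x) = 0 := by
    intro i t ht
    obtain ⟨x, hx, e, he⟩ := hsurj (f.toAlgHom t) (hH _)
    refine ⟨T.component i x, T.component_mem i x, ?_, ?_⟩
    · rw [← T.component_d, hx, map_zero]
    · rw [hH] at he
      rw [map_sub, ← f.component, sub_eq_zero.mp he.symm,
        H.component_same (f.map_grading ht), sub_self]
  -- Descending induction on the degree `i`, written as induction on `k ≥ N - i`.
  have key : ∀ k i, N ≤ i + k → ∀ t ∈ T.grading i, f.toAlgHom t = 0 →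
      F.d (p.toAlgHom t) = 0 → F.IsExact (p.toAlgHom t) := by
    intro k
    induction k with
    | zero => exact fun i hi t ht _ hd => hN i hi _ (p.map_grading ht) hd
    | succ k ih =>
      intro i hi t ht hft hdt
      have hcyc : T.d (U * t) = 0 := by
        obtain ⟨s, hs⟩ := hker (T.d t) (by rw [p.comm_d, hdt])
        rw [hdUmul, hs, ← mul_assoc, hUU, zero_mul, neg_zero]
      -- The class of `U * t` dies in the formal algebra `H`, because `t` does.
      obtain ⟨w, hw⟩ := hinj (U * t) hcyc 
        (by rw [map_mul, hft, mul_zero]; exact ⟨0, map_zero _⟩)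
      have hw' : T.d (T.component (i + 2 * n) w) = U * t := by
        rw [← T.component_d, hw]
        refine T.component_same ?_
        have := SetLike.mul_mem_graded hU ht
        rwa [show 2 * n + 1 + i = i + 2 * n + 1 by ring] at this
      obtain ⟨x, hxm, hx, hfx⟩ := corr _ _ (T.component_mem (i + 2 * n) w)
      set v := T.component (i + 2 * n) w - x with hv
      have hdv : T.d v = U * t := by rw [hv, map_sub, hw', hx, sub_zero]
      obtain ⟨z, hz⟩ := ih (i + 2 * n) (by omega) v
        (Submodule.sub_mem _ (T.component_mem _ _) hxm) hfx
        (by rw [← p.comm_d, hdv, map_mul, pU, zero_mul])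
      obtain ⟨z', rfl⟩ := psurj z
      -- `v - d z'` lies in the ideal of `U` and has the same coboundary `U * t`.
      obtain ⟨s, hs⟩ := hker (v - T.d z') (by rw [map_sub, p.comm_d, hz, sub_self])
      have h0 : U * (t + T.d s) = 0 := by
        have : T.d (v - T.d z') = U * t := by rw [map_sub, T.d_sq, sub_zero, hdv]
        rw [hs, hdUmul] at this
        rw [mul_add, ← this, neg_add_cancel]
      have h1 := hann _ h0
      rw [map_add, p.comm_d] at h1
      exact ⟨- p.toAlgHom s, by rw [map_neg]; exact (eq_neg_of_add_eq_zero_left h1).symm⟩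
  have hom : ∀ i, ∃ x : T.A, T.d x = 0 ∧
      F.IsExact (p.toAlgHom x - F.component i y) := by
    intro i
    obtain ⟨t, ht⟩ := psurj y
    obtain ⟨x, hxm, hx, hfx⟩ := corr i _ (T.component_mem i t)
    refine ⟨x, hx, ?_⟩
    obtain ⟨z, hz⟩ := key N i (by omega) _ (Submodule.sub_mem _ (T.component_mem i t) hxm) hfx
      (by rw [map_sub, map_sub, ← p.comm_d x, hx, map_zero, sub_zero, ← p.component, ht,
            ← F.component_d, hy, map_zero])
    refine ⟨-z, ?_⟩
    rw [map_neg, hz, map_sub, ← p.component, ht, neg_sub]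
  choose x hx z hz using hom
  classical
  have hsum : ∑ i ∈ (DirectSum.decompose F.grading y).support, F.component i y = y := by
    conv_rhs => rw [← DirectSum.sum_support_decompose F.grading y]
    simp [CDGA.component, GradedAlgebra.proj_apply]
  refine ⟨∑ i ∈ (DirectSum.decompose F.grading y).support, x i, ?_,
    ∑ i ∈ (DirectSum.decompose F.grading y).support, z i, ?_⟩
  · simp [map_sum, hx]
  · simp only [map_sum, hz, Finset.sum_sub_distrib, hsum]

/-! ### The minimal model of an odd sphere -/

lemma odd_sphere_generator (S : Sullivan) {m : ℕ} (hS : S.OddSphere m) :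
    ∃ u ∈ S.V m, u ≠ 0 ∧ S.d u = 0 ∧
      ∀ x : S.A, ∃ a c : ℚ, x = a • 1 + c • u := by
  obtain ⟨hm, h1, hV, hd⟩ := hS
  obtain ⟨⟨u, hu⟩, hu0, hspan⟩ := finrank_eq_one_iff'.mp h1
  have hsp : ∀ x ∈ S.V m, ∃ c : ℚ, x = c • u := by
    intro x hx
    obtain ⟨c, hc⟩ := hspan ⟨x, hx⟩
    exact ⟨c, by simpa using (congrArg Subtype.val hc).symm⟩
  refine ⟨u, hu, fun h => hu0 (Subtype.ext h), hd u, ?_⟩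
  have huu : u * u = 0 := S.sq_eq_zero_of_odd hm (S.V_le m hu)
  intro x
  have hx : x ∈ Algebra.adjoin ℚ (⋃ i, (S.V i : Set S.A)) := by rw [S.generates]; trivial
  induction hx using Algebra.adjoin_induction with
  | mem x hx =>
    obtain ⟨i, hi⟩ := Set.mem_iUnion.mp hx
    by_cases h : i = m
    · subst h
      obtain ⟨c, hc⟩ := hsp x hi
      exact ⟨0, c, by simp [hc]⟩
    · rw [hV i h] at hi
      exact ⟨0, 0, by simpa using hi⟩
  | algebraMap r => exact ⟨r, 0, by simp [Algebra.algebraMap_eq_smul_one]⟩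
  | add x y _ _ hx hy =>
    obtain ⟨a, c, rfl⟩ := hx
    obtain ⟨a', c', rfl⟩ := hy
    exact ⟨a + a', c + c', by module⟩
  | mul x y _ _ hx hy =>
    obtain ⟨a, c, rfl⟩ := hx
    obtain ⟨a', c', rfl⟩ := hy
    refine ⟨a * a', a * c' + c * a', ?_⟩
    simp only [add_mul, mul_add, smul_mul_smul_comm, huu, mul_one, one_mul, smul_zero, add_zero]
    module

/-- The model of `S^m` is concentrated in degrees `0` and `m`. -/
lemma odd_sphere_grading (C : CDGA) {m : ℕ} (hm : m ≠ 0) {u : C.A} (hu : u ∈ C.grading m)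
    (hspan : ∀ x : C.A, ∃ a c : ℚ, x = a • 1 + c • u) (i : ℕ) (x : C.A)
    (hx : x ∈ C.grading i) :
    (i = 0 ∧ ∃ a : ℚ, x = a • 1) ∨ (i = m ∧ ∃ c : ℚ, x = c • u) ∨ x = 0 := by
  obtain ⟨a, c, rfl⟩ := hspan x
  have h1 : (1 : C.A) ∈ C.grading 0 := SetLike.one_mem_graded _
  have hc := C.component_same hx
  rw [map_add, map_smul, map_smul] at hc
  by_cases h0 : i = 0
  · subst h0
    rw [C.component_same h1, C.component_ne hu hm, smul_zero, add_zero] at hc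
    exact Or.inl ⟨rfl, a, hc.symm⟩
  · rw [C.component_ne h1 (Ne.symm h0), smul_zero, zero_add] at hc
    by_cases h : i = m
    · subst h
      rw [C.component_same hu] at hc
      exact Or.inr (Or.inl ⟨rfl, c, hc.symm⟩)
    · rw [C.component_ne hu (Ne.symm h), smul_zero] at hc
      exact Or.inr (Or.inr hc.symm)

/-! ### Structure of the total algebra -/

namespace FibrationModel

variable {B : CDGA} {F : Sullivan} (P : FibrationModel B F)

lemma proj_surjective : Function.Surjective P.proj.toAlgHom := by
  have : P.proj.toAlgHom.range = ⊤ := by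
    rw [eq_top_iff, ← F.generates]
    refine Algebra.adjoin_le (Set.iUnion_subset fun i x hx => ?_)
    have hx' : x ∈ F.V i := hx
    rw [← P.proj_V i] at hx'
    obtain ⟨v, -, hv⟩ := hx'
    exact ⟨v, hv⟩
  exact (AlgHom.range_eq_top _).mp this

/-- Relative freeness forces the total algebra to be generated by the base and the fibre
generators: the universal map into the subalgebra they generate is a retraction. -/
lemma adjoin_eq_top :
    Algebra.adjoin ℚ (Set.range (P.incl.toAlgHom : B.A → P.T.A) ∪
      ⋃ i, (P.V i : Set P.T.A)) = ⊤ := by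
  set S := Algebra.adjoin ℚ (Set.range (P.incl.toAlgHom : B.A → P.T.A) ∪
      ⋃ i, (P.V i : Set P.T.A)) with hS
  have hB : ∀ x, P.incl.toAlgHom x ∈ S := fun x =>
    Algebra.subset_adjoin (Or.inl ⟨x, rfl⟩)
  have hV : ∀ i, P.V i ≤ Subalgebra.toSubmodule S := fun i v hv =>
    Algebra.subset_adjoin (Or.inr (Set.mem_iUnion.mpr ⟨i, hv⟩))
  obtain ⟨φ, ⟨hφB, hφV⟩, -⟩ := P.relFree S
    (fun i => (P.T.grading i).comap S.val.toLinearMap)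
    (SetLike.one_mem_graded P.T.grading)
    (fun i j x y hx hy => SetLike.mul_mem_graded (A := P.T.grading) hx hy)
    (fun i j x y hx hy => Subtype.ext (P.T.gcomm hx hy))
    (P.incl.toAlgHom.codRestrict S hB)
    (fun i x hx => P.incl.map_grading hx)
    (fun i => Submodule.inclusion (hV i))
    (fun i v => P.V_le i v.2)
  have huniq := (P.relFree P.T.A P.T.grading (SetLike.one_mem_graded P.T.grading)
    (fun i j x y hx hy => SetLike.mul_mem_graded (A := P.T.grading) hx hy)
    (fun i j x y hx hy => P.T.gcomm hx hy) P.incl.toAlgHom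
    (fun i x hx => P.incl.map_grading hx) (fun i => (P.V i).subtype)
    (fun i v => P.V_le i v.2)).unique
    (y₁ := S.val.comp φ) (y₂ := AlgHom.id ℚ _)
    ⟨fun x => by simp [hφB], fun i v => by rw [AlgHom.comp_apply, hφV]; rfl⟩
    ⟨fun x => rfl, fun i v => rfl⟩
  rw [eq_top_iff]
  intro t _
  have := congrArg (fun ψ : P.T.A →ₐ[ℚ] P.T.A => ψ t) huniq
  simp only [AlgHom.comp_apply, AlgHom.id_apply] at this
  rw [← this]
  exact (φ t).2

end FibrationModel

/-- The degree `i` part of the model `Λu ⊗ F`, `u` of odd degree `m`, realised by upper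
triangular matrices: `y + u b` is encoded as `!![±y, b; 0, y]` with `±` the sign `(-1)^i`. -/
def triGrading (F : CDGA) (m i : ℕ) : Submodule ℚ (Matrix (Fin 2) (Fin 2) F.A) where
  carrier := {M | M 1 1 ∈ F.grading i ∧ M 0 0 = ((-1 : ℚ) ^ i) • M 1 1 ∧ M 1 0 = 0 ∧
    M 0 1 ∈ F.grading (i - m) ∧ (i < m → M 0 1 = 0)}
  zero_mem' := by simp
  add_mem' := by
    rintro a b ⟨h1, h2, h3, h4, h5⟩ ⟨k1, k2, k3, k4, k5⟩
    refine ⟨Submodule.add_mem _ h1 k1, ?_, ?_, Submodule.add_mem _ h4 k4, fun h => ?_⟩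
    · simp [h2, k2]
    · simp [h3, k3]
    · simp [h5 h, k5 h]
  smul_mem' := by
    rintro c a ⟨h1, h2, h3, h4, h5⟩
    refine ⟨Submodule.smul_mem _ c h1, ?_, ?_, Submodule.smul_mem _ c h4, fun h => ?_⟩
    · simp [h2, smul_comm c]
    · simp [h3]
    · simp [h5 h]

lemma triGrading_mul (F : CDGA) (m i j : ℕ) (x y : Matrix (Fin 2) (Fin 2) F.A)
    (hx : x ∈ triGrading F m i) (hy : y ∈ triGrading F m j) :
    x * y ∈ triGrading F m (i + j) := by
  obtain ⟨h1, h2, h3, h4, h5⟩ := hx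
  obtain ⟨k1, k2, k3, k4, k5⟩ := hy
  refine ⟨?_, ?_, ?_, ?_, fun h => ?_⟩
  · simpa [Matrix.mul_apply, h3] using SetLike.mul_mem_graded h1 k1
  · simp [Matrix.mul_apply, h3, k3, h2, k2, pow_add, smul_smul, mul_comm]
  · simp [Matrix.mul_apply, h3, k3]
  · simp only [Matrix.mul_apply, Fin.sum_univ_two, h2]
    refine Submodule.add_mem _ ?_ ?_
    · by_cases hj : j < m
      · simp [k5 hj]
      · rw [smul_mul_assoc, show i + j - m = i + (j - m) by omega]
        exact Submodule.smul_mem _ _ (SetLike.mul_mem_graded h1 k4)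
    · by_cases hi : i < m
      · simp [h5 hi]
      · rw [show i + j - m = (i - m) + j by omega]
        exact SetLike.mul_mem_graded h4 k1
  · simp [Matrix.mul_apply, h5 (by omega), k5 (by omega)]

lemma triGrading_comm (F : CDGA) {m : ℕ} (hm : Odd m) (i j : ℕ)
    (x y : Matrix (Fin 2) (Fin 2) F.A)
    (hx : x ∈ triGrading F m i) (hy : y ∈ triGrading F m j) :
    x * y = ((-1 : ℚ) ^ (i * j)) • (y * x) := by
  obtain ⟨h1, h2, h3, h4, h5⟩ := hx
  obtain ⟨k1, k2, k3, k4, k5⟩ := hy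
  have sgn : ∀ a b : ℕ, ¬ a < m →
      (-1 : ℚ) ^ ((a - m) * b) = (-1 : ℚ) ^ (a * b) * (-1 : ℚ) ^ b := by
    intro a b ha
    obtain ⟨c, rfl⟩ := Nat.exists_eq_add_of_le (not_lt.mp ha)
    rw [Nat.add_sub_cancel_left, add_mul, pow_add, pow_mul (-1 : ℚ) m b, hm.neg_one_pow,
      mul_right_comm, ← mul_pow]
    simp
  have c11 := F.gcomm h1 k1
  have cA : x 1 1 * y 0 1 = ((-1 : ℚ) ^ (i * j) * (-1 : ℚ) ^ i) • (y 0 1 * x 1 1) := by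
    by_cases hj : j < m
    · simp [k5 hj]
    · rw [F.gcomm h1 k4, mul_comm i (j - m), sgn j i hj, mul_comm j i]
  have cB : x 0 1 * y 1 1 = ((-1 : ℚ) ^ (i * j) * (-1 : ℚ) ^ j) • (y 1 1 * x 0 1) := by
    by_cases hi : i < m
    · simp [h5 hi]
    · rw [F.gcomm h4 k1, sgn i j hi]
  have sq : ∀ a : ℕ, (-1 : ℚ) ^ a * (-1 : ℚ) ^ a = 1 := fun a => by rw [← mul_pow]; simp
  ext r s
  fin_cases r <;> fin_cases s
  · simp [Matrix.mul_apply, h2, k2, h3, k3, c11, smul_smul]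
    congr 1; ring
  · simp only [Matrix.mul_apply, Matrix.smul_apply, Fin.sum_univ_two, h2, k2, Fin.zero_eta,
      Fin.mk_one, smul_mul_assoc, cA, cB, smul_add, smul_smul]
    rw [add_comm]
    congr 2
    rw [mul_left_comm, sq, mul_one]
  · simp [Matrix.mul_apply, h3, k3]
  · simp [Matrix.mul_apply, h3, k3, c11]

/-- In the total algebra of a fibration over an odd sphere, the annihilator of the class `u` of
the sphere projects to zero in the fibre. The universal property maps the total algebra to upper
triangular matrices, with `u` going to a matrix unit and the lower right entry recovering the
projection to the fibre. -/
lemma annihilator {SB SF : Sullivan} (P : FibrationModel SB.toCDGA SF) {m : ℕ} (hm : Odd m)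
    (hV : ∀ j, j ≠ m → SB.V j = ⊥) (u : SB.A) (hu : u ∈ SB.V m) (hu0 : u ≠ 0)
    (hspan : ∀ x : SB.A, ∃ a c : ℚ, x = a • 1 + c • u) (t : P.T.A)
    (ht : P.incl.toAlgHom u * t = 0) : P.proj.toAlgHom t = 0 := by
  have hm0 : 0 < m := hm.pos
  obtain ⟨E, hE⟩ : ∃ E : Matrix (Fin 2) (Fin 2) SF.A, E = !![0, 1; 0, 0] := ⟨_, rfl⟩
  have one_mem : (1 : Matrix (Fin 2) (Fin 2) SF.A) ∈ triGrading SF.toCDGA m 0 :=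
    ⟨by simpa using SetLike.one_mem_graded SF.grading, by simp, by simp, by simp, by simp⟩
  have E_mem : E ∈ triGrading SF.toCDGA m m :=
    ⟨by simp [hE], by simp [hE], by simp [hE],
      by simpa [hE] using SetLike.one_mem_graded SF.grading, by simp⟩
  obtain ⟨l, hl⟩ : ∃ l : SB.A →ₗ[ℚ] ℚ, l u = 1 := by
    obtain ⟨l, hl⟩ := Module.Projective.exists_dual_ne_zero ℚ hu0
    exact ⟨(l u)⁻¹ • l, by simp [hl]⟩
  have hlE : ∀ i (v : SB.V i), (l.domRestrict (SB.V i)).smulRight E v ∈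
      triGrading SF.toCDGA m i := by
    intro i v
    by_cases h : i = m
    · subst h
      exact Submodule.smul_mem _ _ E_mem
    · have : v = 0 := by
        have h' : (v : SB.A) ∈ (⊥ : Submodule ℚ SB.A) := hV i h ▸ v.2
        exact Subtype.ext (by simpa using h')
      rw [this, map_zero]
      exact Submodule.zero_mem _
  obtain ⟨g, hg, -⟩ := SB.free (Matrix (Fin 2) (Fin 2) SF.A) (triGrading SF.toCDGA m) one_mem
    (triGrading_mul SF.toCDGA m) (triGrading_comm SF.toCDGA hm)
    (fun i => (l.domRestrict (SB.V i)).smulRight E) hlE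
  have hgu : g u = E := by
    have := hg m ⟨u, hu⟩
    simpa [hl] using this
  have hgdeg : ∀ i (x : SB.A), x ∈ SB.grading i → g x ∈ triGrading SF.toCDGA m i := by
    intro i x hx
    rcases odd_sphere_grading SB.toCDGA hm0.ne' (SB.V_le m hu) hspan i x hx with
      ⟨rfl, a, rfl⟩ | ⟨rfl, c, rfl⟩ | rfl
    · rw [map_smul, map_one]; exact Submodule.smul_mem _ _ one_mem
    · rw [map_smul, hgu]; exact Submodule.smul_mem _ _ E_mem
    · rw [map_zero]; exact Submodule.zero_mem _
  let diag (i : ℕ) : SF.A →ₗ[ℚ] Matrix (Fin 2) (Fin 2) SF.A :=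
    { toFun := fun y => !![((-1 : ℚ) ^ i) • y, 0; 0, y]
      map_add' := fun a b => by ext r s; fin_cases r <;> fin_cases s <;> simp
      map_smul' := fun c a => by
        ext r s; fin_cases r <;> fin_cases s <;> simp [smul_comm c] }
  obtain ⟨φ, ⟨hφB, hφV⟩, -⟩ := P.relFree (Matrix (Fin 2) (Fin 2) SF.A) (triGrading SF.toCDGA m) one_mem
    (triGrading_mul SF.toCDGA m) (triGrading_comm SF.toCDGA hm) g hgdeg
    (fun i => (diag i) ∘ₗ P.proj.toAlgHom.toLinearMap ∘ₗ (P.V i).subtype)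
    (fun i v => ⟨by simpa [diag] using P.proj.map_grading (P.V_le i v.2), by simp [diag],
      by simp [diag], by simp [diag], by simp [diag]⟩)
  -- The lower right entry of the universal map is the projection to the fibre.
  have main : ∀ s : P.T.A, φ s 1 0 = 0 ∧ φ s 1 1 = P.proj.toAlgHom s := by
    intro s
    have hs : s ∈ Algebra.adjoin ℚ (Set.range (P.incl.toAlgHom : SB.A → P.T.A) ∪
      ⋃ i, (P.V i : Set P.T.A)) := by rw [P.adjoin_eq_top]; trivial
    induction hs using Algebra.adjoin_induction with
    | mem s hs =>
      rcases hs with ⟨b, rfl⟩ | hs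
      · obtain ⟨a, c, rfl⟩ := hspan b
        rw [hφB]
        have hp := P.proj_incl m hm0 u (SB.V_le m hu)
        simp [map_add, map_smul, hgu, hp, hE]
      · obtain ⟨i, hi⟩ := Set.mem_iUnion.mp hs
        have := hφV i ⟨s, hi⟩
        simp only at this
        rw [this]
        simp [diag]
    | algebraMap r =>
      simp [Matrix.algebraMap_matrix_apply]
    | add x y _ _ hx hy => simp [hx.1, hx.2, hy.1, hy.2]
    | mul x y _ _ hx hy => simp [Matrix.mul_apply, hx.1, hx.2, hy.1, hy.2]
  have h := congrArg (fun M : Matrix (Fin 2) (Fin 2) SF.A => M 0 1) (congrArg φ ht)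
  simp only [map_mul, hφB, hgu, map_zero] at h
  rw [← (main t).2]
  simpa [Matrix.mul_apply, hE] using h

end RHT

open RHT in
/-- Proposition 3.3.  Let `F` be elliptic with positive Euler
characteristic and let `F → E → S^{2n+1}` (`n ≥ 1`) be a rational fibration.  If the
total space `E` is formal, then the fibration is TNCZ. -/
theorem halperin_variations_stmt5
    (n : ℕ) (hn : 1 ≤ n)
    (SB : Sullivan) (hSBmin : SB.Minimal) (hSB : SB.OddSphere (2 * n + 1))
    (SF : Sullivan) (hSFmin : SF.Minimal) (hSFell : SF.Elliptic) (hSFchi : SF.PosEuler)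
    (P : FibrationModel SB.toCDGA SF)
    (hEformal : Formal P.T) :
    P.TNCZ := by
  have hm : Odd (2 * n + 1) := ⟨n, rfl⟩
  obtain ⟨u, hu, hu0, hdu, hspan⟩ := odd_sphere_generator SB hSB
  have hug := SB.V_le _ hu
  obtain ⟨-, -, N, hN⟩ := hSFell
  have pU := P.proj_incl _ hm.pos u hug
  refine surjective_of_formal P.proj n hn (P.incl.toAlgHom u) (P.incl.map_grading hug)
    (by rw [← P.incl.comm_d, hdu, map_zero]) P.proj_surjective pU ?_
    (fun t ht => annihilator P hm hSB.2.2.1 u hu hu0 hspan t ht) N ?_ hEformal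
  · intro x hx
    have hle : (⨆ i, SB.grading (i + 1)) ≤ Submodule.span ℚ {u} := by
      refine iSup_le fun i b hb => Submodule.mem_span_singleton.mpr ?_
      rcases odd_sphere_grading SB.toCDGA (by omega) hug hspan (i + 1) b hb with
        ⟨h, -⟩ | ⟨-, c, rfl⟩ | rfl
      · omega
      · exact ⟨c, rfl⟩
      · exact ⟨0, zero_smul _ _⟩
    have hmem := (P.ker_proj x).mp hx
    clear hx
    induction hmem using Submodule.mul_induction_on' with
    | mem_mul_mem b hb s _ =>
      obtain ⟨b, hb, rfl⟩ := hb
      obtain ⟨c, rfl⟩ := Submodule.mem_span_singleton.mp (hle hb)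
      exact ⟨c • s, by simp⟩
    | add x _ y _ hx hy =>
      obtain ⟨s, rfl⟩ := hx
      obtain ⟨s', rfl⟩ := hy
      exact ⟨s + s', by rw [mul_add]⟩
  · intro i hi y hy hdy
    have := hN i hi
    have h0 := Subsingleton.elim
      (Submodule.Quotient.mk ⟨y, hy, hdy⟩ : SF.toCDGA.cohomology i) 0
    rw [Submodule.Quotient.mk_eq_zero] at h0
    exact h0.2
end
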